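/- arXiv:1710.00280 — 6 statements merged into one kernel-verified Lean document; each statement's English description precedes it below -/
import Mathlib

section
/- Let Ω ⊂ {z ∈ ℂ : Re z > 0} be an open convex domain that contains the positive real axis {x + 0i : x > 0} and is symmetric with respect to it (z ∈ Ω iff conj(z) ∈ Ω). Let u be a Martin function on Ω. Then for every x > 0, the supremum of u over the vertical slice θ_x = Ω ∩ {x + iy : y ∈ ℝ} equals u(x); moreover, if Ω is not equal to the right half plane {z : Re z > 0}, then for every x > 0 the function y ↦ u(x + iy) is strictly decreasing in |y| on θ_x: whenever 0 ≤ y₁ < y₂ and x + i y₂ ∈ Ω, one has u(x + i y₂) < u(x + i y₁). -/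
/-!
The Martin function `u` is the real part of a conformal map, and it is compared with its own
reflection in the horizontal lines `Im z = t`, `t > 0`.

Let `φ` be a Riemann map of `Ω` onto the unit disc (`exists_riemann_map`). A circle `|z| = r` meets
`Ω` in a single arc, so the length-area method shows that `φ z` tends to a point `e` of the unit
circle as `z → ∞` in `Ω` (`exists_limit_at_infty`). Hence `u ∘ φ⁻¹` is a positive harmonic function
of the disc which vanishes at the boundary away from `e`, and it is a multiple of the Poisson kernel
with pole `e` (`martin_eq_poisson`). It follows that `u = Re F` with `F` univalent, real on the real
axis, and `F → ∞` at `∞` (`exists_conformal_of_martin`).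

Fix `t > 0`. Reflection in `Im z = t` maps the part `V` of `Ω` above the line into `Ω`, and the
difference `W` of the reflected function and `u` is harmonic in `V`, is zero on the line, and is
nonnegative on the rest of `∂V`, where `u = 0`. Because `V` may be unbounded, the minimum principle
needs a bound at infinity. Since `F` is univalent and symmetric, it is not real on `V` and maps `V`
into a quadrant. There `Re (∓ i F ^ 2) ^ (3 / 4)` is a positive harmonic function which dominates
`|F| ≥ u ≥ -W` at infinity (`exists_barrier`), and `W ≥ 0` follows (`le_reflection`). The choice
`t = y / 2` compares `x + i y` with `x`, and `t = (y₁ + y₂) / 2` compares `x + i y₂` with `x + i y₁`.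

When `Ω` is not the half plane its slices are bounded (`bddAbove_slice`). Then `W` cannot vanish
identically: at the top of a slice `u` vanishes and its reflection does not. The strong minimum
principle makes the inequality strict (`lt_reflection`).
-/

open Set Filter Metric Topology
open scoped ComplexConjugate

/-! ### Univalent functions and disc automorphisms -/

/-- An injective holomorphic function is open at each point of its open domain. -/
lemma nhds_le_map_of_injOn {U : Set ℂ} (hU : IsOpen U) {f : ℂ → ℂ}
    (hf : DifferentiableOn ℂ f U) (hinj : InjOn f U) {z : ℂ} (hz : z ∈ U) :
    𝓝 (f z) ≤ map f (𝓝 z) := by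
  have ha : AnalyticAt ℂ f z := hf.analyticAt (hU.mem_nhds hz)
  refine ha.eventually_constant_or_nhds_le_map_nhds.resolve_left fun hc => ?_
  have h2 : ∀ᶠ w in 𝓝[≠] z, w ∈ U ∧ f w = f z ∧ w ≠ z := by
    filter_upwards [nhdsWithin_le_nhds hc, nhdsWithin_le_nhds (hU.mem_nhds hz),
      self_mem_nhdsWithin] with w h1 h2 h3
    exact ⟨h2, h1, h3⟩
  obtain ⟨w, h1, h2, h3⟩ := h2.exists
  exact h3 (hinj h1 hz h2)

/-- The inverse of an injective holomorphic function is holomorphic on the image. At a point of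
`f '' U` coming from a zero of `f'` the inverse is first seen to be continuous; such zeros are
isolated, so the singularity is removable. -/
lemma exists_holomorphic_inverse {U : Set ℂ} (hU : IsOpen U) {f : ℂ → ℂ}
    (hf : DifferentiableOn ℂ f U) (hinj : InjOn f U) :
    ∃ g : ℂ → ℂ, DifferentiableOn ℂ g (f '' U) ∧ ∀ z ∈ U, g (f z) = z := by
  set g := Function.invFunOn f U with hg
  have hgf : ∀ z ∈ U, g (f z) = z := fun z hz => hinj.leftInvOn_invFunOn hz
  have hcont : ∀ z ∈ U, ContinuousAt g (f z) := by
    intro z hz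
    have h1 : map g (𝓝 (f z)) ≤ map g (map f (𝓝 z)) :=
      map_mono (nhds_le_map_of_injOn hU hf hinj hz)
    have h2 : map g (map f (𝓝 z)) = 𝓝 z := by
      rw [map_map]
      have : (g ∘ f) =ᶠ[𝓝 z] id := by
        filter_upwards [hU.mem_nhds hz] with w hw using hgf w hw
      rw [map_congr this, map_id]
    rw [ContinuousAt, hgf z hz]
    exact h1.trans h2.le
  have himg : ∀ z ∈ U, f '' U ∈ 𝓝 (f z) := fun z hz =>
    nhds_le_map_of_injOn hU hf hinj hz (image_mem_map (hU.mem_nhds hz))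
  -- away from the zeros of `deriv f` the inverse function theorem applies
  have hdiff : ∀ z ∈ U, deriv f z ≠ 0 → DifferentiableAt ℂ g (f z) := by
    intro z hz hd
    have h1 : HasDerivAt f (deriv f z) (g (f z)) := by
      rw [hgf z hz]; exact (hf.differentiableAt (hU.mem_nhds hz)).hasDerivAt
    refine (HasDerivAt.of_local_left_inverse (hcont z hz) h1 hd ?_).differentiableAt
    filter_upwards [himg z hz] with y hy
    obtain ⟨w, hw, rfl⟩ := hy
    rw [hgf w hw]
  refine ⟨g, ?_, hgf⟩
  rintro _ ⟨z, hz, rfl⟩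
  refine DifferentiableAt.differentiableWithinAt (AnalyticAt.differentiableAt ?_)
  refine Complex.analyticAt_of_differentiable_on_punctured_nhds_of_continuousAt ?_ (hcont z hz)
  have had : AnalyticAt ℂ (deriv f) z := (hf.analyticAt (hU.mem_nhds hz)).deriv
  rcases had.eventually_eq_zero_or_eventually_ne_zero with h0 | h0
  · -- a vanishing derivative near `z` would make `f` locally constant
    exfalso
    obtain ⟨r, hr, hrb⟩ := Metric.mem_nhds_iff.1 (inter_mem h0 (hU.mem_nhds hz))
    have hconst : ∀ w ∈ ball z r, f w = f z := fun w hw =>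
      isOpen_ball.is_const_of_deriv_eq_zero (convex_ball z r).isPreconnected
        (hf.mono fun x hx => (hrb hx).2) (fun x hx => (hrb hx).1) hw (mem_ball_self hr)
    have h2 : ∀ᶠ w in 𝓝[≠] z, w ∈ ball z r ∧ w ≠ z := by
      filter_upwards [nhdsWithin_le_nhds (ball_mem_nhds z hr), self_mem_nhdsWithin]
        with w h1 h2 using ⟨h1, h2⟩
    obtain ⟨w, h1, h3⟩ := h2.exists
    exact h3 (hinj (hrb h1).2 hz (hconst w h1))
  · rw [eventually_nhdsWithin_iff] at h0 ⊢
    have h1 : ∀ᶠ y in 𝓝 (f z), g y ∈ U ∧ (g y ∈ ({z} : Set ℂ)ᶜ → deriv f (g y) ≠ 0) := by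
      have h2 := hcont z hz
      rw [ContinuousAt, hgf z hz] at h2
      exact h2.eventually ((show ∀ᶠ w in 𝓝 z, w ∈ U from hU.mem_nhds hz).and h0)
    filter_upwards [h1, himg z hz] with y hy hyU hne
    obtain ⟨w, hw, rfl⟩ := hyU
    rw [hgf w hw] at hy
    refine hdiff w hw (hy.2 ?_)
    rintro rfl
    exact hne rfl

/-- The disc automorphism `w ↦ (w - a) / (1 - ā w)`. -/
noncomputable def mob (a w : ℂ) : ℂ := (w - a) / (1 - conj a * w)

lemma mob_den_ne {a w : ℂ} (ha : ‖a‖ < 1) (hw : ‖w‖ < 1) : 1 - conj a * w ≠ 0 := by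
  intro h
  have h1 : ‖conj a * w‖ = 1 := by rw [← sub_eq_zero.1 h]; simp
  rw [norm_mul, RCLike.norm_conj] at h1
  nlinarith [norm_nonneg a, norm_nonneg w]

lemma norm_mob_lt {a w : ℂ} (ha : ‖a‖ < 1) (hw : ‖w‖ < 1) : ‖mob a w‖ < 1 := by
  have hd := mob_den_ne ha hw
  rw [mob, norm_div, div_lt_one (norm_pos_iff.2 hd)]
  refine lt_of_pow_lt_pow_left₀ 2 (norm_nonneg _) ?_
  have ha2 : ‖a‖ ^ 2 < 1 := by nlinarith [norm_nonneg a]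
  have hw2 : ‖w‖ ^ 2 < 1 := by nlinarith [norm_nonneg w]
  rw [← Complex.normSq_eq_norm_sq, Complex.normSq_apply] at ha2 hw2 ⊢
  rw [← Complex.normSq_eq_norm_sq, Complex.normSq_apply]
  simp only [Complex.sub_re, Complex.sub_im, Complex.one_re, Complex.one_im, Complex.mul_re,
    Complex.mul_im, Complex.conj_re, Complex.conj_im]
  nlinarith [mul_pos (sub_pos.2 ha2) (sub_pos.2 hw2)]

lemma mob_neg_mob {a w : ℂ} (ha : ‖a‖ < 1) (hw : ‖w‖ < 1) : mob (-a) (mob a w) = w := by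
  have hd := mob_den_ne ha hw
  have h2 := mob_den_ne (a := -a) (w := mob a w) (by simpa) (norm_mob_lt ha hw)
  have h3 : mob a w * (1 - conj a * w) = w - a := div_mul_cancel₀ _ hd
  rw [mob, div_eq_iff h2, map_neg]
  linear_combination h3

lemma mob_self (a : ℂ) : mob a a = 0 := by simp [mob]

lemma differentiableOn_mob {a : ℂ} (ha : ‖a‖ < 1) : DifferentiableOn ℂ (mob a) (ball 0 1) := by
  intro w hw
  have := mob_den_ne ha (by simpa using hw : ‖w‖ < 1)
  have h2 : DifferentiableAt ℂ (fun w => 1 - conj a * w) w :=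
    (differentiableAt_const _).sub (differentiableAt_id.const_mul _)
  exact (DifferentiableAt.div (by fun_prop) h2 this).differentiableWithinAt

lemma mob_injOn {a : ℂ} (ha : ‖a‖ < 1) : InjOn (mob a) (ball 0 1) := by
  intro w hw v hv h
  rw [← mob_neg_mob ha (by simpa using hw : ‖w‖ < 1), h, mob_neg_mob ha (by simpa using hv)]

/-- Squaring, conjugated by disc automorphisms so as to fix `0`, strictly contracts the disc. -/
lemma norm_mob_sq_mob_lt {a b w : ℂ} (ha : ‖a‖ < 1) (hb : ‖b‖ < 1) (hab : mob a 0 = b ^ 2)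
    (hw : ‖w‖ < 1) (hw0 : w ≠ 0) : ‖mob (-a) (mob (-b) w ^ 2)‖ < ‖w‖ := by
  set Φ : ℂ → ℂ := fun w => mob (-a) (mob (-b) w ^ 2) with hΦ
  have hna : ‖-a‖ < 1 := by simpa
  have hnb : ‖-b‖ < 1 := by simpa
  have hsq : ∀ x : ℂ, ‖x‖ < 1 → ‖x ^ 2‖ < 1 := fun x hx => by
    rw [norm_pow]; nlinarith [norm_nonneg x]
  have hm0 : ∀ x : ℂ, mob x 0 = -x := fun x => by simp [mob]
  have hmap : MapsTo Φ (ball 0 1) (ball 0 1) := fun x hx => by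
    have hx : ‖x‖ < 1 := by simpa using hx
    simpa using norm_mob_lt hna (hsq _ (norm_mob_lt hnb hx))
  have hd : DifferentiableOn ℂ Φ (ball 0 1) := by
    refine (differentiableOn_mob hna).comp ((differentiableOn_mob hnb).pow 2) fun x hx => ?_
    have hx : ‖x‖ < 1 := by simpa using hx
    simpa using hsq _ (norm_mob_lt hnb hx)
  have h0 : Φ 0 = 0 := by
    simp only [hΦ, hm0, neg_neg]
    rw [← hab, mob_neg_mob ha (by simp)]
  have hmap' : MapsTo Φ (ball 0 1) (closedBall (Φ 0) 1) := fun x hx => by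
    rw [h0]; exact ball_subset_closedBall (hmap hx)
  have hle : ‖Φ w‖ ≤ ‖w‖ := by
    have := Complex.dist_le_div_mul_dist_of_mapsTo_ball hd hmap' (z := w) (by simpa using hw)
    simpa [h0] using this
  refine lt_of_le_of_ne hle fun heq => ?_
  have hds : ‖dslope Φ 0 w‖ = 1 / 1 := by
    rw [dslope_of_ne _ hw0, slope_def_module, h0, norm_smul, sub_zero, sub_zero, norm_inv, heq]
    field_simp [norm_ne_zero_iff.2 hw0]
  have haff := Complex.affine_of_mapsTo_ball_of_norm_dslope_eq_div hd hmap'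
    (z₀ := w) (by simpa using hw) hds
  have hC : dslope Φ 0 w ≠ 0 := by
    intro h; rw [h] at hds; simp at hds
  -- a rotation is injective, whereas `Φ` takes the same value at the preimages of `±v`
  have key : ∀ v : ℂ, ‖v‖ < 1 → mob b v = mob b (-v) := by
    intro v hv
    have hv' : ‖-v‖ < 1 := by simpa
    have e1 : ∀ v : ℂ, ‖v‖ < 1 → Φ (mob b v) = mob (-a) (v ^ 2) := fun v hv => by
      simp only [hΦ]; rw [mob_neg_mob hb hv]
    have e2 : Φ (mob b v) = Φ (mob b (-v)) := by rw [e1 v hv, e1 _ hv', neg_sq]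
    have e3 := (haff (by simpa using norm_mob_lt hb hv)).symm.trans
      (e2.trans (haff (by simpa using norm_mob_lt hb hv')))
    simpa [h0, hC] using e3
  have h12 : ‖(1 / 2 : ℂ)‖ < 1 := by norm_num
  have := mob_injOn hb (by simpa using h12) (by simp; norm_num) (key (1 / 2) h12)
  norm_num at this

/-! ### The Riemann mapping theorem for convex domains -/

/-- Compactness of the extremal class in the Riemann mapping theorem: a maximising sequence of
univalent maps into the disc has a univalent limit. The limit is taken along an ultrafilter, which
replaces the extraction of a subsequence in the theorem of Montel. -/
lemma exists_limit_in_class {U : Set ℂ} (hU : IsOpen U) (hUc : IsPreconnected U) {z₀ p : ℂ}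
    (hz₀ : z₀ ∈ U) (hp : p ∈ U) {f : ℕ → ℂ → ℂ} {M : ℝ} (hM : 0 < M)
    (hd : ∀ n, DifferentiableOn ℂ (f n) U) (hinj : ∀ n, InjOn (f n) U)
    (hmap : ∀ n, MapsTo (f n) U (ball 0 1)) (h0 : ∀ n, f n z₀ = 0)
    (hlim : Tendsto (fun n => ‖f n p‖) atTop (𝓝 M)) :
    ∃ g : ℂ → ℂ, DifferentiableOn ℂ g U ∧ InjOn g U ∧ MapsTo g U (ball 0 1) ∧ g z₀ = 0 ∧
      ‖g p‖ = M := by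
  classical
  set l : Ultrafilter ℕ := hyperfilter ℕ with hl
  have hex : ∀ z ∈ U, ∃ y ∈ closedBall (0 : ℂ) 1, Tendsto (fun n => f n z) l (𝓝 y) := by
    intro z hz
    refine (isCompact_closedBall (0 : ℂ) 1).ultrafilter_le_nhds (l.map fun n => f n z) ?_
    rw [Ultrafilter.coe_map, le_principal_iff]
    exact Filter.mem_map.2 (univ_mem' fun n => ball_subset_closedBall (hmap n hz))
  choose! g hg1 hg2 using hex
  -- uniform Lipschitz bounds upgrade pointwise convergence to locally uniform convergence
  have hunif : TendstoLocallyUniformlyOn f g l U := by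
    rw [Metric.tendstoLocallyUniformlyOn_iff]
    intro ε hε z hz
    obtain ⟨r, hr, hrU⟩ := Metric.isOpen_iff.1 hU z hz
    have hlip : ∀ n, ∀ w ∈ ball z r, dist (f n w) (f n z) ≤ 2 / r * dist w z := by
      intro n w hw
      refine Complex.dist_le_div_mul_dist_of_mapsTo_ball ((hd n).mono hrU) ?_ hw
      intro x hx
      have h1 := hmap n (hrU hx)
      have h2 := hmap n hz
      rw [mem_ball_zero_iff] at h1 h2
      rw [mem_closedBall, dist_eq_norm]
      linarith [norm_sub_le (f n x) (f n z)]
    have hlipg : ∀ w ∈ ball z r, dist (g w) (g z) ≤ 2 / r * dist w z := by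
      intro w hw
      exact le_of_tendsto ((hg2 w (hrU hw)).dist (hg2 z hz)) (Eventually.of_forall fun n => hlip n w hw)
    set δ := min r (ε * r / 6) with hδ
    have hδ0 : 0 < δ := by positivity
    refine ⟨ball z δ, mem_nhdsWithin_of_mem_nhds (ball_mem_nhds z hδ0), ?_⟩
    filter_upwards [(hg2 z hz).eventually (ball_mem_nhds (g z) (by positivity : 0 < ε / 3))]
      with n hn w hw
    have hw1 : w ∈ ball z r := ball_subset_ball (min_le_left _ _) hw
    have hw2 : dist w z < ε * r / 6 := lt_of_lt_of_le hw (min_le_right _ _)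
    have hw3 : 2 / r * dist w z < ε / 3 := by
      calc 2 / r * dist w z < 2 / r * (ε * r / 6) := by gcongr
        _ = ε / 3 := by field_simp; norm_num
    have h1 := hlip n w hw1
    have h2 := hlipg w hw1
    have h3 : dist (f n z) (g z) < ε / 3 := hn
    calc dist (g w) (f n w) ≤ dist (g w) (g z) + dist (g z) (f n z) + dist (f n z) (f n w) :=
          dist_triangle4 _ _ _ _
      _ < ε := by rw [dist_comm (g z), dist_comm (f n z) (f n w)]; linarith
  have hgd : DifferentiableOn ℂ g U := hunif.differentiableOn (Eventually.of_forall hd) hU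
  have hgz : g z₀ = 0 := by
    refine tendsto_nhds_unique (hg2 z₀ hz₀) ?_
    simp only [h0]; exact tendsto_const_nhds
  have hgp : ‖g p‖ = M := by
    refine tendsto_nhds_unique (hg2 p hp).norm (hlim.mono_left ?_)
    rw [← Nat.cofinite_eq_atTop]; exact hyperfilter_le_cofinite
  have hnc : ∀ c : ℂ, ¬ ∀ z ∈ U, g z = c := by
    intro c hc
    rw [hc p hp, ← hc z₀ hz₀, hgz, norm_zero] at hgp
    exact hM.ne hgp
  refine ⟨g, hgd, ?_, ?_, hgz, hgp⟩
  · -- Hurwitz: a nonconstant limit of injective functions is injective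
    intro a ha b hb hab
    by_contra hne
    have hga : AnalyticOnNhd ℂ g U := hgd.analyticOnNhd hU
    have hiso := (hga b hb).eventually_eq_or_eventually_ne (analyticAt_const (v := g a))
    rcases hiso with h1 | h1
    · exact hnc (g a) fun z hz => hga.eqOn_of_preconnected_of_eventuallyEq
        (analyticOnNhd_const (v := g a)) hUc hb h1 hz
    · rw [eventually_nhdsWithin_iff] at h1
      have h2 : ∀ᶠ w in 𝓝 b, (w ∈ ({b} : Set ℂ)ᶜ → g w ≠ g a) ∧ w ∈ U ∧ w ≠ a := by
        filter_upwards [h1, hU.mem_nhds hb, isOpen_compl_singleton.mem_nhds (Ne.symm hne)]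
          with w e1 e2 e3 using ⟨e1, e2, e3⟩
      obtain ⟨r, hr, hrb⟩ := nhds_basis_closedBall.mem_iff.1 h2
      obtain ⟨w₀, hw₀, hmin⟩ := (isCompact_sphere b r).exists_isMinOn
        (NormedSpace.sphere_nonempty.2 hr.le) (f := fun w => ‖g w - g a‖)
        ((hgd.continuousOn.mono fun w hw => (hrb (sphere_subset_closedBall hw)).2.1).sub
          continuousOn_const).norm
      set m := ‖g w₀ - g a‖ with hm
      have hm0 : 0 < m := by
        refine norm_pos_iff.2 (sub_ne_zero.2 ((hrb (sphere_subset_closedBall hw₀)).1 ?_))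
        rintro rfl
        simp at hw₀; linarith
      have hu := (tendstoLocallyUniformlyOn_iff_forall_isCompact hU).1 hunif (closedBall b r)
        (fun w hw => (hrb hw).2.1) (isCompact_closedBall b r)
      rw [Metric.tendstoUniformlyOn_iff] at hu
      obtain ⟨n, hn1, hn2⟩ := ((hu (m / 4) (by positivity)).and
        ((hg2 a ha).eventually (ball_mem_nhds (g a) (by positivity : 0 < m / 4)))).exists
      have hn2 : dist (f n a) (g a) < m / 4 := hn2
      have hnz : ∀ w ∈ closedBall b r, f n w - f n a ≠ 0 := fun w hw h =>
        (hrb hw).2.2 (hinj n (hrb hw).2.1 ha (sub_eq_zero.1 h))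
      have hlow : ∀ w ∈ sphere b r, m / 2 ≤ ‖f n w - f n a‖ := by
        intro w hw
        have e1 : m ≤ dist (g w) (g a) := by rw [dist_eq_norm]; exact hmin hw
        have e2 := hn1 w (sphere_subset_closedBall hw)
        rw [← dist_eq_norm]
        have := dist_triangle4 (g w) (f n w) (f n a) (g a)
        linarith
      -- `f n - f n a` has no zero near `b`, so the maximum principle applies to its reciprocal,
      -- which is small on the circle and large at the centre
      have hbd := Complex.norm_le_of_forall_mem_frontier_norm_le (U := ball b r) isBounded_ball
        (f := fun w => (f n w - f n a)⁻¹) (C := (m / 2)⁻¹) ?_ ?_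
        (subset_closure (mem_ball_self hr))
      · rw [norm_inv, inv_le_inv₀ (norm_pos_iff.2 (hnz b (mem_closedBall_self hr.le)))
          (by positivity), ← dist_eq_norm] at hbd
        have e1 := hn1 b (mem_closedBall_self hr.le)
        have := dist_triangle4 (f n b) (g b) (g a) (f n a)
        rw [← hab, dist_self, dist_comm (f n b) (g a), dist_comm (g a) (f n a)] at this
        rw [← hab] at e1
        linarith
      · have : DifferentiableOn ℂ (fun w => (f n w - f n a)⁻¹) (closedBall b r) := fun w hw =>
          (((hd n).mono (fun w hw => (hrb hw).2.1) w hw).sub_const _).inv (hnz w hw)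
        exact DifferentiableOn.diffContOnCl (this.mono closure_ball_subset_closedBall)
      · intro w hw
        rw [frontier_ball b hr.ne'] at hw
        rw [norm_inv]
        exact inv_anti₀ (by positivity) (hlow w hw)
  · intro z hz
    rw [mem_ball_zero_iff]
    refine lt_of_le_of_ne (by simpa using hg1 z hz) fun h1 => ?_
    have hmax : IsMaxOn (norm ∘ g) U z := fun w hw => by
      have := hg1 w hw
      simp only [mem_closedBall, dist_zero_right] at this
      simpa [h1] using this
    have := Complex.norm_eqOn_of_isPreconnected_of_isMaxOn hUc hU hgd hz hmax hz₀
    simp [hgz, h1] at this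

/-- A zero-free holomorphic function on a convex open set has a holomorphic square root. The identity
`h z ^ 2 = g z` holds at every `z`, also off `U`, where nothing is claimed about regularity. -/
lemma exists_holomorphic_sqrt {U : Set ℂ} (hU : IsOpen U) (hUc : Convex ℝ U) (hne : U.Nonempty)
    {g : ℂ → ℂ} (hg : DifferentiableOn ℂ g U) (hg0 : ∀ z ∈ U, g z ≠ 0) :
    ∃ h : ℂ → ℂ, DifferentiableOn ℂ h U ∧ ∀ z, h z ^ 2 = g z := by
  have hsc : IsSimplyConnected U := by
    have := hUc.contractibleSpace hne
    unfold IsSimplyConnected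
    infer_instance
  obtain ⟨h, hc, hsq⟩ := Complex.exists_continuousOn_pow_eq hsc hU hg.continuousOn
    (by rintro ⟨z, hz, h0⟩; exact hg0 z hz h0) two_ne_zero
  refine ⟨h, fun z hz => ?_, hsq⟩
  have hhz : h z ≠ 0 := fun h0 => hg0 z hz (by rw [← hsq, h0]; simp)
  have hgd := (hg.differentiableAt (hU.mem_nhds hz)).hasDerivAt
  have hh : HasDerivAt h ((2 * h z)⁻¹ * deriv g z) z := by
    have hca := hc.continuousAt (hU.mem_nhds hz)
    rw [hasDerivAt_iff_tendsto_slope] at hgd ⊢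
    -- the difference quotient of `h` is that of `h ^ 2` divided by `h w + h z`
    have hsum : Tendsto (fun w => (h w + h z)⁻¹) (𝓝[≠] z) (𝓝 (2 * h z)⁻¹) := by
      rw [two_mul]
      exact ((hca.tendsto.mono_left nhdsWithin_le_nhds).add_const _).inv₀ (by simpa using hhz)
    refine (hsum.mul hgd).congr' ?_
    have hev : ∀ᶠ w in 𝓝 z, h w + h z ≠ 0 :=
      (hca.add_const (h z)).eventually_ne (by simpa using hhz)
    filter_upwards [nhdsWithin_le_nhds hev] with w hw
    rw [slope_def_field, slope_def_field, ← hsq w, ← hsq z]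
    field_simp
    ring
  exact hh.differentiableAt.differentiableWithinAt

/-- Riemann mapping theorem for a convex domain `U ≠ ∅` that admits an injective holomorphic
map to the disc. -/
lemma exists_riemann_map {U : Set ℂ} (hU : IsOpen U) (hUc : Convex ℝ U) {z₀ p : ℂ}
    (hz₀ : z₀ ∈ U) (hp : p ∈ U) (hne : z₀ ≠ p) {f₁ : ℂ → ℂ} (hf₁ : DifferentiableOn ℂ f₁ U)
    (hf₁i : InjOn f₁ U) (hf₁m : MapsTo f₁ U (ball 0 1)) (hf₁0 : f₁ z₀ = 0) :
    ∃ φ : ℂ → ℂ, DifferentiableOn ℂ φ U ∧ InjOn φ U ∧ φ '' U = ball 0 1 := by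
  set S : Set (ℂ → ℂ) := {f | DifferentiableOn ℂ f U ∧ InjOn f U ∧ MapsTo f U (ball 0 1) ∧
    f z₀ = 0} with hS
  have hf₁S : f₁ ∈ S := ⟨hf₁, hf₁i, hf₁m, hf₁0⟩
  set V : Set ℝ := (fun f : ℂ → ℂ => ‖f p‖) '' S with hV
  have hVb : BddAbove V := ⟨1, by
    rintro _ ⟨f, hf, rfl⟩
    simpa using (mem_ball_zero_iff.1 (hf.2.2.1 hp)).le⟩
  have hVn : V.Nonempty := ⟨_, f₁, hf₁S, rfl⟩
  have hM : 0 < sSup V := by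
    refine lt_of_lt_of_le ?_ (le_csSup hVb ⟨f₁, hf₁S, rfl⟩)
    refine norm_pos_iff.2 fun h => hne (hf₁i hz₀ hp (by rw [hf₁0, h]))
  obtain ⟨s, -, hs, hsV⟩ := exists_seq_tendsto_sSup hVn hVb
  choose f hfS hfs using hsV
  obtain ⟨g, hgd, hgi, hgm, hg0, hgM⟩ := exists_limit_in_class hU hUc.isPreconnected hz₀ hp hM
    (fun n => (hfS n).1) (fun n => (hfS n).2.1) (fun n => (hfS n).2.2.1) (fun n => (hfS n).2.2.2)
    (by simpa only [hfs] using hs)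
  refine ⟨g, hgd, hgi, Subset.antisymm (image_subset_iff.2 hgm) fun a ha => ?_⟩
  by_contra hna
  have ha : ‖a‖ < 1 := by simpa using ha
  have hgn : ∀ z ∈ U, ‖g z‖ < 1 := fun z hz => by simpa using hgm hz
  -- a square root of `mob a ∘ g` yields a competitor with a larger value at `p`
  have hTd : DifferentiableOn ℂ (fun z => mob a (g z)) U := (differentiableOn_mob ha).comp hgd hgm
  have hT0 : ∀ z ∈ U, mob a (g z) ≠ 0 := fun z hz h => by
    rw [mob, div_eq_zero_iff, or_iff_left (mob_den_ne ha (hgn z hz)), sub_eq_zero] at h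
    exact hna ⟨z, hz, h⟩
  obtain ⟨h, hhd, hsq⟩ := exists_holomorphic_sqrt hU hUc ⟨_, hz₀⟩ hTd hT0
  have hhn : ∀ z ∈ U, ‖h z‖ < 1 := fun z hz => by
    have := norm_mob_lt ha (hgn z hz)
    rw [← hsq, norm_pow] at this
    exact (pow_lt_one_iff_of_nonneg (norm_nonneg _) two_ne_zero).1 this
  have hhm : MapsTo h U (ball 0 1) := fun z hz => by simpa using hhn z hz
  set b := h z₀ with hb
  have hb1 : ‖b‖ < 1 := hhn z₀ hz₀
  have hkS : (fun z => mob b (h z)) ∈ S := by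
    refine ⟨(differentiableOn_mob hb1).comp hhd hhm, ?_, ?_, mob_self b⟩
    · intro z hz w hw hzw
      have e1 : h z = h w := mob_injOn hb1 (hhm hz) (hhm hw) hzw
      refine hgi hz hw (mob_injOn ha (hgm hz) (hgm hw) ?_)
      rw [← hsq, ← hsq, e1]
    · intro z hz
      simpa using norm_mob_lt hb1 (hhn z hz)
  have hab : mob a 0 = b ^ 2 := by rw [hb, hsq, hg0]
  have hkp : ‖mob b (h p)‖ < 1 := norm_mob_lt hb1 (hhn p hp)
  have hgk : mob (-a) (mob (-b) (mob b (h p)) ^ 2) = g p := by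
    rw [mob_neg_mob hb1 (hhn p hp), hsq, mob_neg_mob ha (hgn p hp)]
  have hk0 : mob b (h p) ≠ 0 := fun h0 =>
    hne (hkS.2.1 hz₀ hp (by simp only [h0]; exact mob_self b))
  have hlt := norm_mob_sq_mob_lt ha hb1 hab hkp hk0
  rw [hgk, hgM] at hlt
  exact absurd (le_csSup hVb ⟨_, hkS, rfl⟩) (not_le.2 hlt)

/-! ### The length-area method -/

open MeasureTheory in
/-- The image `H '' W` lies in the disc, so `∫ |H'|²` over `W`, which is its area, is finite. Hence
some vertical slice of `W` arbitrarily far to the right has small Dirichlet integral. -/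
lemma exists_small_slice {W : Set ℂ} (hW : IsOpen W) {H : ℂ → ℂ} (hH : DifferentiableOn ℂ H W)
    (hinj : InjOn H W) (hmap : MapsTo H W (ball 0 1)) {ε : ℝ} (hε : 0 < ε) (S : ℝ) :
    ∃ s, S < s ∧ ∫⁻ θ : ℝ, W.indicator (fun z => ENNReal.ofReal (‖deriv H z‖ ^ 2))
      (⟨s, θ⟩ : ℂ) < ENNReal.ofReal ε := by
  have hm : Measurable (W.indicator (fun z => ENNReal.ofReal (‖deriv H z‖ ^ 2))) :=
    (((measurable_deriv H).norm.pow_const 2).ennreal_ofReal).indicator hW.measurableSet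
  have harea : ∫⁻ z, W.indicator (fun z => ENNReal.ofReal (‖deriv H z‖ ^ 2)) z < ⊤ := by
    rw [lintegral_indicator hW.measurableSet]
    have key := lintegral_abs_det_fderiv_eq_addHaar_image volume hW.measurableSet
      (f := H) (f' := fun z => (ContinuousLinearMap.toSpanSingleton ℂ (deriv H z)).restrictScalars ℝ)
      (fun z hz => by
        have h1 := ((hH z hz).differentiableAt (hW.mem_nhds hz)).hasDerivAt.hasFDerivAt
        exact (h1.restrictScalars ℝ).hasFDerivWithinAt) hinj
    have hdet : ∀ z, |((ContinuousLinearMap.toSpanSingleton ℂ (deriv H z)).restrictScalars ℝ).det|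
        = ‖deriv H z‖ ^ 2 := by
      intro z
      simp [ContinuousLinearMap.det, LinearMap.det_restrictScalars,
        Algebra.norm_complex_eq, Complex.normSq_eq_norm_sq]
    simp only [hdet] at key
    rw [key]
    exact lt_of_le_of_lt (measure_mono hmap.image_subset) measure_ball_lt_top
  rw [← Complex.volume_preserving_equiv_real_prod.symm.lintegral_comp hm,
    Measure.volume_eq_prod, lintegral_prod (fun a => W.indicator
      (fun z => ENNReal.ofReal (‖deriv H z‖ ^ 2)) (Complex.measurableEquivRealProd.symm a))
      (hm.comp Complex.measurableEquivRealProd.symm.measurable).aemeasurable] at harea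
  by_contra! hcon
  have h2 : ∫⁻ s in Ioi S, ENNReal.ofReal ε ≤ ∫⁻ s in Ioi S, ∫⁻ θ : ℝ,
      W.indicator (fun z => ENNReal.ofReal (‖deriv H z‖ ^ 2)) (⟨s, θ⟩ : ℂ) :=
    setLIntegral_mono' measurableSet_Ioi fun s hs => hcon s hs
  have h3 := (h2.trans (setLIntegral_le_lintegral _ _)).trans_lt harea
  simp [hε] at h3

open MeasureTheory in
/-- Along a segment of a slice with Dirichlet integral below `ε ^ 2`, the oscillation of `H` is
controlled by the length of the segment; `|H'| ≤ ε / 2 + |H'|² / (2 ε)` replaces Cauchy-Schwarz. -/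
lemma norm_sub_le_of_small_slice {W : Set ℂ} (hW : IsOpen W) {H : ℂ → ℂ}
    (hH : DifferentiableOn ℂ H W) {ε s a b : ℝ} (hε : 0 < ε) (hab : a ≤ b)
    (hs : ∫⁻ θ : ℝ, W.indicator (fun z => ENNReal.ofReal (‖deriv H z‖ ^ 2))
      (⟨s, θ⟩ : ℂ) < ENNReal.ofReal (ε ^ 2)) (hseg : ∀ θ ∈ Icc a b, (⟨s, θ⟩ : ℂ) ∈ W) :
    ‖H ⟨s, b⟩ - H ⟨s, a⟩‖ ≤ (b - a + 1) * ε := by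
  have hmk : ∀ θ : ℝ, (⟨s, θ⟩ : ℂ) = s + θ * Complex.I := fun θ => by
    apply Complex.ext <;> simp
  have hcmk : Continuous (fun θ : ℝ => (⟨s, θ⟩ : ℂ)) := by
    simp only [hmk]; fun_prop
  have hc : ContinuousOn (fun θ : ℝ => deriv H ⟨s, θ⟩) (Icc a b) :=
    (hH.deriv hW).continuousOn.comp hcmk.continuousOn hseg
  have hder : ∀ θ ∈ uIcc a b, HasDerivAt (fun θ : ℝ => H ⟨s, θ⟩)
      (deriv H ⟨s, θ⟩ * Complex.I) θ := by
    intro θ hθ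
    rw [uIcc_of_le hab] at hθ
    have h1 := ((hH _ (hseg θ hθ)).differentiableAt (hW.mem_nhds (hseg θ hθ))).hasDerivAt
    have h2 : HasDerivAt (fun θ : ℝ => (⟨s, θ⟩ : ℂ)) Complex.I θ := by
      simp only [hmk]
      simpa using ((Complex.ofRealCLM.hasDerivAt (x := θ)).mul_const Complex.I).const_add (s : ℂ)
    exact HasDerivAt.comp θ h1 h2
  have hci : ContinuousOn (fun θ : ℝ => deriv H ⟨s, θ⟩ * Complex.I) (uIcc a b) := by
    rw [uIcc_of_le hab]; exact hc.mul continuousOn_const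
  rw [← intervalIntegral.integral_eq_sub_of_hasDerivAt hder hci.intervalIntegrable]
  have hsq : ContinuousOn (fun θ : ℝ => ‖deriv H ⟨s, θ⟩‖ ^ 2) (uIcc a b) := by
    rw [uIcc_of_le hab]; exact hc.norm.pow 2
  have hI : ∫ θ in a..b, ‖deriv H ⟨s, θ⟩‖ ^ 2 ≤ ε ^ 2 := by
    rw [intervalIntegral.integral_of_le hab]
    have h0 : ENNReal.ofReal (∫ θ in Ioc a b, ‖deriv H ⟨s, θ⟩‖ ^ 2) ≤ ENNReal.ofReal (ε ^ 2) := by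
      rw [ofReal_integral_eq_lintegral_ofReal
        ((intervalIntegrable_iff_integrableOn_Ioc_of_le hab).1 hsq.intervalIntegrable)
        (ae_of_all _ fun θ => by positivity)]
      refine le_trans ?_ hs.le
      rw [← lintegral_indicator measurableSet_Ioc]
      refine lintegral_mono fun θ => ?_
      by_cases hθ : θ ∈ Ioc a b
      · simp [hθ, hseg θ (Ioc_subset_Icc_self hθ)]
      · simp [hθ]
    exact (ENNReal.ofReal_le_ofReal_iff (by positivity)).1 h0
  calc ‖∫ θ in a..b, deriv H ⟨s, θ⟩ * Complex.I‖
      ≤ ∫ θ in a..b, (ε / 2 + ‖deriv H ⟨s, θ⟩‖ ^ 2 * (1 / (2 * ε))) := by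
        refine intervalIntegral.norm_integral_le_of_norm_le hab (ae_of_all _ fun θ _ => ?_)
          (intervalIntegrable_const.add (hsq.intervalIntegrable.mul_const _))
        rw [norm_mul, Complex.norm_I, mul_one]
        have : ε / 2 + ‖deriv H ⟨s, θ⟩‖ ^ 2 * (1 / (2 * ε)) - ‖deriv H ⟨s, θ⟩‖
            = (ε - ‖deriv H ⟨s, θ⟩‖) ^ 2 / (2 * ε) := by field_simp; ring
        have h2 : 0 ≤ (ε - ‖deriv H ⟨s, θ⟩‖) ^ 2 / (2 * ε) := by positivity
        linarith
    _ = (b - a) * (ε / 2) + (∫ θ in a..b, ‖deriv H ⟨s, θ⟩‖ ^ 2) * (1 / (2 * ε)) := by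
        rw [intervalIntegral.integral_add intervalIntegrable_const
          (hsq.intervalIntegrable.mul_const _)]
        simp [mul_div_assoc]
    _ ≤ (b - a) * (ε / 2) + ε ^ 2 * (1 / (2 * ε)) := by gcongr
    _ ≤ (b - a + 1) * ε := by
        have : ε ^ 2 * (1 / (2 * ε)) = ε / 2 := by field_simp
        rw [this]; nlinarith [mul_nonneg (sub_nonneg.2 hab) hε.le]

/-! ### Geometry of the domain and arcs of small oscillation -/

/-- Vertical slices of a convex set symmetric about the real axis are symmetric intervals. -/
lemma mem_of_abs_im_le {Ω : Set ℂ} (hΩconv : Convex ℝ Ω)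
    (hsym : ∀ z : ℂ, z ∈ Ω ↔ (starRingEnd ℂ) z ∈ Ω) {x y y' : ℝ} (h : (⟨x, y⟩ : ℂ) ∈ Ω)
    (hy : |y'| ≤ |y|) : (⟨x, y'⟩ : ℂ) ∈ Ω := by
  rcases eq_or_ne y 0 with h0 | h0
  · have : y' = 0 := by simpa [h0] using hy
    rwa [this, ← h0]
  have h2 := (hsym _).1 h
  have hr : |y' / y| ≤ 1 := by
    rw [abs_div]; exact div_le_one_of_le₀ hy (abs_nonneg _)
  obtain ⟨h3, h4⟩ := abs_le.1 hr
  have := hΩconv h h2 (a := (1 + y' / y) / 2) (b := (1 - y' / y) / 2) (by linarith) (by linarith)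
    (by ring)
  convert this using 1
  apply Complex.ext
  · simp; ring
  · simp; field_simp; ring

/-- The positive direction belongs to the recession cone of `Ω`: the point `z + s` is a convex
combination of a point of `Ω` slightly beyond `z` and a far away point of the axis. -/
lemma add_ofReal_mem {Ω : Set ℂ} (hΩo : IsOpen Ω) (hΩconv : Convex ℝ Ω)
    (haxis : ∀ x : ℝ, 0 < x → (x : ℂ) ∈ Ω) {z : ℂ} (hz : z ∈ Ω) {s : ℝ} (hs : 0 ≤ s) :
    z + s ∈ Ω := by
  rcases hs.eq_or_lt with h0 | h0
  · simpa [← h0] using hz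
  have hc : ContinuousAt (fun l : ℝ => ((1 - l)⁻¹ : ℝ) • z) 0 := by
    have : ContinuousAt (fun l : ℝ => (1 - l)⁻¹) 0 :=
      ContinuousAt.inv₀ (by fun_prop) (by norm_num)
    exact this.smul continuousAt_const
  have h1 : ∀ᶠ l : ℝ in 𝓝 0, ((1 - l)⁻¹ : ℝ) • z ∈ Ω :=
    hc.eventually_mem (hΩo.mem_nhds (by simpa using hz))
  have h2 : ∀ᶠ l : ℝ in 𝓝 0, l < 1 := Iio_mem_nhds one_pos
  have h3 : ∀ᶠ l : ℝ in 𝓝[>] 0, ((1 - l)⁻¹ : ℝ) • z ∈ Ω ∧ l < 1 ∧ 0 < l :=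
    (h1.filter_mono nhdsWithin_le_nhds).and ((h2.filter_mono nhdsWithin_le_nhds).and
      self_mem_nhdsWithin)
  obtain ⟨l, hl1, hl2, hl3⟩ := h3.exists
  have := hΩconv hl1 (haxis (s / l) (by positivity)) (a := 1 - l) (b := l) (by linarith) hl3.le
    (by ring)
  convert this using 1
  rw [smul_smul, mul_inv_cancel₀ (by linarith), one_smul]
  have : (l : ℂ) ≠ 0 := by exact_mod_cast hl3.ne'
  simp; field_simp

/-- Moving along a circle about `0` towards the positive axis does not leave `Ω`, so each set
`Ω ∩ {|z| = r}` is a single symmetric arc. -/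
lemma mem_of_norm_eq {Ω : Set ℂ} (hΩo : IsOpen Ω) (hΩconv : Convex ℝ Ω)
    (haxis : ∀ x : ℝ, 0 < x → (x : ℂ) ∈ Ω)
    (hsym : ∀ z : ℂ, z ∈ Ω ↔ (starRingEnd ℂ) z ∈ Ω) {z w : ℂ} (hz : z ∈ Ω)
    (hn : ‖w‖ = ‖z‖) (hi : |w.im| ≤ |z.im|) (hw : 0 < w.re) : w ∈ Ω := by
  have h1 : (⟨z.re, w.im⟩ : ℂ) ∈ Ω := mem_of_abs_im_le hΩconv hsym (y := z.im) hz hi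
  have h2 : z.re ≤ w.re := by
    have h3 := Complex.sq_norm w
    have h4 := Complex.sq_norm z
    rw [Complex.normSq_apply] at h3 h4
    rw [hn] at h3
    have h5 := sq_le_sq.2 hi
    exact le_of_sq_le_sq (by nlinarith) hw.le
  have := add_ofReal_mem hΩo hΩconv haxis h1 (sub_nonneg.2 h2)
  convert this using 1
  apply Complex.ext <;> simp

/-- On circular arcs `Ω ∩ {|z| = r}` with suitable arbitrarily large `r`, a univalent map `φ` to the
disc has small oscillation: this is the length-area estimate in the coordinate `log z`, where the
arcs become vertical segments of length less than `π`. -/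
lemma exists_arc_oscillation_le {Ω : Set ℂ} (hΩo : IsOpen Ω) (hΩconv : Convex ℝ Ω)
    (hsub : Ω ⊆ {z : ℂ | 0 < z.re}) (haxis : ∀ x : ℝ, 0 < x → (x : ℂ) ∈ Ω)
    (hsym : ∀ z : ℂ, z ∈ Ω ↔ (starRingEnd ℂ) z ∈ Ω) {φ : ℂ → ℂ}
    (hφ : DifferentiableOn ℂ φ Ω) (hφi : InjOn φ Ω) (hφm : MapsTo φ Ω (ball 0 1))
    {ε : ℝ} (hε : 0 < ε) (R : ℝ) :
    ∃ r : ℝ, R < r ∧ 0 < r ∧ ∀ z ∈ Ω, ‖z‖ = r → ‖φ z - φ r‖ ≤ ε := by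
  set W : Set ℂ := {w | |w.im| < Real.pi / 2} ∩ Complex.exp ⁻¹' Ω with hWd
  have hW : IsOpen W := (isOpen_lt (by fun_prop) continuous_const).inter
    (hΩo.preimage Complex.continuous_exp)
  have hH : DifferentiableOn ℂ (φ ∘ Complex.exp) W :=
    hφ.comp Complex.differentiable_exp.differentiableOn fun w hw => hw.2
  have hinj : InjOn (φ ∘ Complex.exp) W := by
    intro a ha b hb hab
    have ha1 : -(Real.pi / 2) < a.im ∧ a.im < Real.pi / 2 := abs_lt.1 ha.1
    have hb1 : -(Real.pi / 2) < b.im ∧ b.im < Real.pi / 2 := abs_lt.1 hb.1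
    have := Real.pi_pos
    exact Complex.exp_inj_of_neg_pi_lt_of_le_pi (by linarith) (by linarith) (by linarith)
      (by linarith) (hφi ha.2 hb.2 hab)
  obtain ⟨s, hs, hsl⟩ := exists_small_slice hW hH hinj (fun w hw => hφm hw.2)
    (ε := (ε / 3) ^ 2) (by positivity) (Real.log (max R 1))
  have hexp : ∀ θ : ℝ, Complex.exp ⟨s, θ⟩
      = ⟨Real.exp s * Real.cos θ, Real.exp s * Real.sin θ⟩ := fun θ =>
    Complex.ext (Complex.exp_re _) (Complex.exp_im _)
  refine ⟨Real.exp s, ?_, Real.exp_pos s, ?_⟩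
  · refine (le_max_left R 1).trans_lt ?_
    rwa [← Real.log_lt_iff_lt_exp (by positivity)]
  intro z hz hzn
  have hzre : 0 < z.re := hsub hz
  have harg : |z.arg| < Real.pi / 2 := Complex.abs_arg_lt_pi_div_two_iff.2 (Or.inl hzre)
  obtain ⟨harg1, harg2⟩ := abs_lt.1 harg
  have hzexp : Complex.exp ⟨s, z.arg⟩ = z := by
    rw [hexp, ← hzn, Complex.norm_mul_cos_arg, Complex.norm_mul_sin_arg]
  have hrexp : Complex.exp ⟨s, 0⟩ = (Real.exp s : ℝ) := by
    rw [hexp]; apply Complex.ext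
    · simp only [Real.cos_zero, mul_one, Complex.ofReal_re]
    · simp only [Real.sin_zero, mul_zero, Complex.ofReal_im]
  have hmem : ∀ θ : ℝ, |θ| ≤ |z.arg| → (⟨s, θ⟩ : ℂ) ∈ W := by
    intro θ hθ
    have hθ' := hθ.trans_lt harg
    refine ⟨hθ', ?_⟩
    rw [mem_preimage]
    refine mem_of_norm_eq hΩo hΩconv haxis hsym hz ?_ ?_ ?_
    · rw [Complex.norm_exp, hzn]
    · rw [← hzexp, hexp, hexp, abs_mul, abs_mul]
      have hpp := Real.pi_pos
      refine mul_le_mul_of_nonneg_left ?_ (abs_nonneg _)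
      rw [Real.abs_sin_eq_sin_abs_of_abs_le_pi (by linarith),
        Real.abs_sin_eq_sin_abs_of_abs_le_pi (by linarith)]
      exact Real.sin_le_sin_of_le_of_le_pi_div_two (by linarith [abs_nonneg θ]) harg.le hθ
    · rw [hexp]
      exact mul_pos (Real.exp_pos s) (Real.cos_pos_of_mem_Ioo (abs_lt.1 hθ'))
  have hpi := Real.pi_lt_four
  rcases le_total 0 z.arg with h0 | h0
  · have := norm_sub_le_of_small_slice hW hH (a := 0) (b := z.arg) (by positivity) h0 hsl
      (fun θ hθ => hmem θ (by rw [abs_of_nonneg hθ.1, abs_of_nonneg h0]; exact hθ.2))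
    simp only [Function.comp, hzexp, hrexp] at this
    refine this.trans ?_
    nlinarith
  · have := norm_sub_le_of_small_slice hW hH (a := z.arg) (b := 0) (by positivity) h0 hsl
      (fun θ hθ => hmem θ (by
        rw [abs_of_nonpos hθ.2, abs_of_nonpos h0]; exact neg_le_neg hθ.1))
    simp only [Function.comp, hzexp, hrexp] at this
    rw [norm_sub_rev]
    refine this.trans ?_
    nlinarith

/-! ### The boundary value of the Riemann map at infinity -/

/-- A Riemann map `φ` of `Ω` has a limit `e` on the unit circle as `z → ∞` in `Ω`. A crosscut
`|z| = r` with small oscillation is mapped into a small neighbourhood of `e`. If `φ z` with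
`|z| > r` were outside a cap at `e`, then the convex remainder of the disc would join `φ z` to `0`
without meeting the image of the crosscut. -/
lemma exists_limit_at_infty {Ω : Set ℂ} (hΩo : IsOpen Ω) (hΩconv : Convex ℝ Ω)
    (hsub : Ω ⊆ {z : ℂ | 0 < z.re}) (haxis : ∀ x : ℝ, 0 < x → (x : ℂ) ∈ Ω)
    (hsym : ∀ z : ℂ, z ∈ Ω ↔ (starRingEnd ℂ) z ∈ Ω) {φ : ℂ → ℂ}
    (hφ : DifferentiableOn ℂ φ Ω) (hφi : InjOn φ Ω) (hφs : φ '' Ω = ball 0 1) :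
    ∃ e : ℂ, ‖e‖ = 1 ∧ ∀ δ > 0, ∃ R : ℝ, ∀ z ∈ Ω, R < ‖z‖ → ‖φ z - e‖ < δ := by
  have hφm : MapsTo φ Ω (ball 0 1) := fun z hz => hφs ▸ mem_image_of_mem φ hz
  obtain ⟨ψ, hψ, hψφ⟩ := exists_holomorphic_inverse hΩo hφ hφi
  rw [hφs] at hψ
  have hφψ : ∀ w ∈ ball (0 : ℂ) 1, ψ w ∈ Ω ∧ φ (ψ w) = w := by
    intro w hw
    rw [← hφs] at hw
    obtain ⟨z, hz, rfl⟩ := hw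
    rw [hψφ z hz]; exact ⟨hz, rfl⟩
  choose r hr1 hr2 hr3 using fun n : ℕ => exists_arc_oscillation_le hΩo hΩconv hsub haxis hsym hφ
    hφi hφm (ε := 1 / ((n : ℝ) + 1)) (by positivity) n
  obtain ⟨e, he, k, hk, hlim⟩ := (isCompact_closedBall (0 : ℂ) 1).tendsto_subseq
    (x := fun n => φ (r n)) fun n => ball_subset_closedBall (hφm (haxis _ (hr2 n)))
  have hrtop : Tendsto (fun n => r (k n)) atTop atTop :=
    (tendsto_atTop_mono (fun n => (hr1 n).le) tendsto_natCast_atTop_atTop).comp hk.tendsto_atTop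
  -- if `e` were inside the disc, then `r (k n)` would converge to the finite point `ψ e`
  have he1 : ‖e‖ = 1 := by
    rw [mem_closedBall_zero_iff] at he
    refine le_antisymm he (not_lt.1 fun hlt => ?_)
    have hc : ContinuousAt ψ e :=
      hψ.continuousOn.continuousAt (isOpen_ball.mem_nhds (mem_ball_zero_iff.2 hlt))
    have h1 : Tendsto (fun n => ‖ψ (φ (r (k n)))‖) atTop (𝓝 ‖ψ e‖) :=
      (hc.tendsto.comp hlim).norm
    refine not_tendsto_nhds_of_tendsto_atTop hrtop ‖ψ e‖ (h1.congr fun n => ?_)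
    rw [hψφ _ (haxis _ (hr2 _)), Complex.norm_real, Real.norm_of_nonneg (hr2 _).le]
  refine ⟨e, he1, fun δ₀ hδ₀ => ?_⟩
  -- the cap `1 - 2 δ ≤ Re (ē ζ)` of the disc has points at distance at most `2 √δ` from `e`
  obtain ⟨δ, hδ, hδ1, hδ2⟩ : ∃ δ > 0, δ ≤ 1 / 4 ∧ 4 * δ < δ₀ ^ 2 :=
    ⟨min (1 / 4) (δ₀ ^ 2 / 8), by positivity, min_le_left _ _, by
      have := min_le_right (1 / 4) (δ₀ ^ 2 / 8)
      have : 0 < δ₀ ^ 2 := by positivity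
      linarith⟩
  have hev1 : ∀ᶠ n in atTop, ‖φ (r (k n)) - e‖ < δ := by
    have := hlim.eventually (ball_mem_nhds e hδ)
    filter_upwards [this] with n hn using mem_ball_iff_norm.1 hn
  have hev2 : ∀ᶠ n in atTop, 1 / ((k n : ℝ) + 1) < δ :=
    (tendsto_one_div_add_atTop_nhds_zero_nat.comp hk.tendsto_atTop).eventually
      (gt_mem_nhds hδ)
  obtain ⟨n, hn1, hn2, hn3⟩ :=
    (hev1.and (hev2.and (hrtop.eventually_gt_atTop ‖ψ 0‖))).exists
  set ρ := r (k n) with hρ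
  refine ⟨ρ, fun z hz hzρ => ?_⟩
  have hcap : 1 - 2 * δ ≤ (conj e * φ z).re := by
    by_contra! hlt
    set A : Set ℂ := ball 0 1 ∩ {ζ | (conj e * ζ).re < 1 - 2 * δ} with hA
    have hAc : IsPreconnected A := by
      refine ((convex_ball (0 : ℂ) 1).inter ?_).isPreconnected
      exact convex_halfSpace_lt (𝕜 := ℝ) (f := fun ζ : ℂ => (conj e * ζ).re)
        ⟨fun a b => by simp [mul_add], fun c a => by simp; ring⟩ _
    have h0A : (0 : ℂ) ∈ A := ⟨by simp, by simp; linarith⟩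
    have hzA : φ z ∈ A := ⟨hφm hz, hlt⟩
    have hcont : ContinuousOn (fun ζ => ‖ψ ζ‖) A :=
      (hψ.continuousOn.mono inter_subset_left).norm
    obtain ⟨ζ, hζA, hζ⟩ := hAc.intermediate_value h0A hzA hcont
      (show ρ ∈ Icc ‖ψ 0‖ ‖ψ (φ z)‖ from ⟨hn3.le, by rw [hψφ z hz]; exact hzρ.le⟩)
    obtain ⟨hζ1, hζ2⟩ := hφψ ζ hζA.1
    have h1 := hr3 (k n) _ hζ1 hζ
    rw [hζ2] at h1
    have h2 : ‖ζ - e‖ ≤ 2 * δ := by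
      have := norm_sub_le_norm_sub_add_norm_sub ζ (φ ρ) e
      linarith
    have h3 : ‖conj e * (ζ - e)‖ ≤ 2 * δ := by
      rwa [norm_mul, RCLike.norm_conj, he1, one_mul]
    have h4 := (abs_le.1 ((Complex.abs_re_le_norm _).trans h3)).1
    have h5 : (conj e * e).re = 1 := by
      rw [mul_comm, Complex.mul_conj, Complex.normSq_eq_norm_sq, he1]; simp
    rw [mul_sub, Complex.sub_re, h5] at h4
    have h6 : (conj e * ζ).re < 1 - 2 * δ := hζA.2
    linarith
  have hφz : ‖φ z‖ < 1 := mem_ball_zero_iff.1 (hφm hz)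
  have hsq : ‖φ z - e‖ ^ 2 = ‖φ z‖ ^ 2 + 1 - 2 * (conj e * φ z).re := by
    have h1 : ‖e‖ ^ 2 = 1 := by rw [he1]; norm_num
    rw [← h1]
    simp only [Complex.sq_norm, Complex.normSq_apply, Complex.sub_re, Complex.sub_im,
      Complex.mul_re, Complex.conj_re, Complex.conj_im]
    ring
  have : ‖φ z - e‖ ^ 2 < δ₀ ^ 2 := by
    nlinarith [norm_nonneg (φ z)]
  exact lt_of_pow_lt_pow_left₀ 2 hδ₀.le this

/-! ### The Poisson representation of a concentrated harmonic function -/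

open InnerProductSpace in
/-- A nonnegative harmonic function in the disc that tends to `0` at all boundary points, uniformly
away from `e`, is a multiple of the Poisson kernel with pole `e`. In the Poisson formula on circles
of radius `r → 1`, the kernel is nearly constant close to `e`, and elsewhere the function is small. -/
lemma harmonic_eq_poisson_of_concentrated {w : ℂ → ℝ} (hw : HarmonicOnNhd w (ball 0 1))
    (hpos : ∀ z ∈ ball (0 : ℂ) 1, 0 ≤ w z) {e : ℂ} (he : ‖e‖ = 1)
    (hlim : ∀ δ > 0, ∀ η > 0, ∃ ρ < 1, ∀ ζ : ℂ, ρ < ‖ζ‖ → ‖ζ‖ < 1 → δ ≤ ‖ζ - e‖ → w ζ ≤ η)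
    {z : ℂ} (hz : ‖z‖ < 1) : w z = w 0 * ((e + z) / (e - z)).re := by
  set k : ℂ → ℝ := Complex.re ∘ herglotzRieszKernel 0 z with hk
  have hkd : ∀ ζ, k ζ = ((ζ + z) / (ζ - z)).re := fun ζ => by simp [hk, herglotzRieszKernel]
  rw [← hkd]
  set ρ₀ := (1 + ‖z‖) / 2 with hρ₀
  have hzρ : ‖z‖ < ρ₀ := by rw [hρ₀]; linarith
  have hρ1 : ρ₀ < 1 := by rw [hρ₀]; linarith
  set M := 2 / (ρ₀ - ‖z‖) with hM
  have hMpos : 0 < M := div_pos two_pos (sub_pos.2 hzρ)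
  have hkM : ∀ ζ : ℂ, ρ₀ ≤ ‖ζ‖ → ‖ζ‖ ≤ 1 → |k ζ| ≤ M := by
    intro ζ h1 h2
    rw [hkd]
    refine (Complex.abs_re_le_norm _).trans ?_
    rw [norm_div]
    have h3 := norm_add_le ζ z
    have h4 := norm_sub_norm_le ζ z
    rw [hM]
    exact div_le_div₀ two_pos.le (by linarith) (sub_pos.2 hzρ) (by linarith)
  have hkc : ContinuousAt k e := by
    have h1 : k = fun ζ => ((ζ + z) / (ζ - z)).re := funext hkd
    rw [h1]
    have h2 : e - z ≠ 0 := by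
      intro h
      rw [sub_eq_zero] at h
      rw [h] at he; linarith
    exact Complex.continuous_re.continuousAt.comp (by fun_prop (disch := exact h2))
  have hw0 : 0 ≤ w 0 := hpos 0 (by simp)
  have main : ∀ η > 0, |w z - k e * w 0| ≤ η * (w 0 + 2 * M) := by
    intro η hη
    obtain ⟨δ, hδ, hδk⟩ := Metric.continuousAt_iff.1 hkc η hη
    obtain ⟨ρ, hρ, hρw⟩ := hlim δ hδ η hη
    obtain ⟨r, hr1, hr2⟩ := exists_between (max_lt hρ hρ1)
    have hr3 : ρ < r := (le_max_left _ _).trans_lt hr1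
    have hr4 : ρ₀ < r := (le_max_right _ _).trans_lt hr1
    have hr0 : 0 < r := (norm_nonneg z).trans_lt (hzρ.trans hr4)
    have hwr : HarmonicOnNhd w (closedBall 0 r) := fun x hx =>
      hw x (closedBall_subset_ball hr2 hx)
    have hwc : ContinuousOn w (sphere 0 r) := fun x hx =>
      ((hwr x (sphere_subset_closedBall hx)).1.continuousAt).continuousWithinAt
    have h1 := hwr.circleAverage_re_herglotzRieszKernel_smul (w := z)
      (mem_ball_zero_iff.2 (hzρ.trans hr4))
    have h2 : Real.circleAverage w 0 r = w 0 :=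
      InnerProductSpace.HarmonicOnNhd.circleAverage_eq (by rwa [abs_of_pos hr0])
    have hkcont : ContinuousOn k (sphere 0 r) := by
      have := continuousOn_herglotzRieszKernel_sphere (c := 0) (w := z) (R := r)
        (mem_ball_zero_iff.2 (hzρ.trans hr4))
      rw [abs_of_pos hr0] at this
      exact Complex.continuous_re.comp_continuousOn this
    have hi1 : CircleIntegrable w 0 r := hwc.circleIntegrable hr0.le
    have hi2 : CircleIntegrable (k • w) 0 r := (hkcont.smul hwc).circleIntegrable hr0.le
    have hi3 : CircleIntegrable (k e • w) 0 r :=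
      (continuousOn_const.smul hwc).circleIntegrable hr0.le
    have h3 : w z - k e * w 0 = Real.circleAverage (k • w - k e • w) 0 r := by
      rw [Real.circleAverage_sub hi2 hi3, Real.circleAverage_smul, h2, h1, smul_eq_mul]
    rw [h3]
    refine Real.abs_circleAverage_le_circleAverage_abs.trans ?_
    have h4 : Real.circleAverage ((η • w) + fun _ => 2 * M * η) 0 r = η * (w 0 + 2 * M) := by
      have hi4 : CircleIntegrable (η • w) 0 r :=
        (continuousOn_const.smul hwc).circleIntegrable hr0.le
      rw [Real.circleAverage_add hi4 (continuousOn_const.circleIntegrable hr0.le), Real.circleAverage_smul, h2,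
        Real.circleAverage_const, smul_eq_mul]
      ring
    rw [← h4]
    refine Real.circleAverage_mono
      (((hkcont.smul hwc).sub (continuousOn_const.smul hwc)).abs.circleIntegrable hr0.le)
      (((continuousOn_const.smul hwc).add continuousOn_const).circleIntegrable hr0.le) ?_
    intro ζ hζ
    rw [abs_of_pos hr0, mem_sphere_zero_iff_norm] at hζ
    have hwζ : 0 ≤ w ζ := hpos ζ (mem_ball_zero_iff.2 (by rw [hζ]; exact hr2))
    simp only [Pi.abs_apply, Pi.sub_apply, Pi.mul_apply, Pi.smul_apply, smul_eq_mul,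
      Pi.add_apply]
    rw [← sub_mul, abs_mul, abs_of_nonneg hwζ]
    rcases lt_or_ge ‖ζ - e‖ δ with hd | hd
    · have h5 : |k ζ - k e| ≤ η := by
        have := hδk (x := ζ) (by rwa [dist_eq_norm])
        rw [Real.dist_eq] at this
        exact this.le
      have h6 : |k ζ - k e| * w ζ ≤ η * w ζ := by gcongr
      have : 0 ≤ 2 * M * η := by positivity
      linarith
    · have h5 : |k ζ - k e| ≤ 2 * M := by
        have h6 := hkM ζ (by rw [hζ]; exact hr4.le) (by rw [hζ]; exact hr2.le)
        have h7 := hkM e (by rw [he]; exact hρ1.le) he.le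
        have := abs_sub (k ζ) (k e)
        linarith
      have h6 := hρw ζ (by rwa [hζ]) (by rwa [hζ]) hd
      have h7 : |k ζ - k e| * w ζ ≤ 2 * M * η := by gcongr
      have : 0 ≤ η * w ζ := by positivity
      linarith
  have hlim0 : |w z - k e * w 0| ≤ 0 := by
    have hc : Tendsto (fun η : ℝ => η * (w 0 + 2 * M)) (𝓝[>] 0) (𝓝 0) := by
      have : Tendsto (fun η : ℝ => η * (w 0 + 2 * M)) (𝓝 0) (𝓝 (0 * (w 0 + 2 * M))) :=
        (continuous_id.mul continuous_const).tendsto 0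
      rw [zero_mul] at this
      exact this.mono_left nhdsWithin_le_nhds
    exact ge_of_tendsto hc (eventually_mem_nhdsWithin.mono fun η hη => main η hη)
  have := abs_nonpos_iff.1 hlim0
  linarith

open InnerProductSpace in
lemma harmonicOnNhd_of_iteratedFDerivWithin {Ω : Set ℂ} (hΩo : IsOpen Ω) {u : ℂ → ℝ}
    (hu2 : ContDiffOn ℝ 2 u Ω)
    (hharm : ∀ z ∈ Ω,
      iteratedFDerivWithin ℝ 2 u Ω z ![(1 : ℂ), (1 : ℂ)]
      + iteratedFDerivWithin ℝ 2 u Ω z ![Complex.I, Complex.I] = 0) :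
    HarmonicOnNhd u Ω := by
  intro z hz
  refine ⟨hu2.contDiffAt (hΩo.mem_nhds hz), ?_⟩
  filter_upwards [hΩo.mem_nhds hz] with x hx
  rw [laplacian_eq_iteratedFDeriv_complexPlane]
  have := hharm x hx
  rwa [iteratedFDerivWithin_of_isOpen 2 hΩo hx] at this

open InnerProductSpace in
lemma harmonicOnNhd_comp {Ω V : Set ℂ} (hΩo : IsOpen Ω) (hV : IsOpen V) {u : ℂ → ℝ} {ψ : ℂ → ℂ}
    (hu : HarmonicOnNhd u Ω) (hψ : DifferentiableOn ℂ ψ V) (hm : MapsTo ψ V Ω) :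
    HarmonicOnNhd (u ∘ ψ) V := by
  intro z hz
  obtain ⟨R, hR, hball⟩ := Metric.isOpen_iff.1 hΩo (ψ z) (hm hz)
  obtain ⟨G, hG, hGu⟩ := HarmonicOnNhd.exists_analyticOnNhd_ball_re_eq
    (fun x hx => hu x (hball hx) : HarmonicOnNhd u (ball (ψ z) R))
  have hψa : AnalyticAt ℂ ψ z := hψ.analyticAt (hV.mem_nhds hz)
  have hGψ : AnalyticAt ℂ (fun x => G (ψ x)) z :=
    (hG _ (mem_ball_self hR)).comp hψa
  have hev : (fun x => (G (ψ x)).re) =ᶠ[𝓝 z] u ∘ ψ := by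
    filter_upwards [hψa.continuousAt.preimage_mem_nhds (ball_mem_nhds _ hR)] with x hx
    exact hGu hx
  exact (harmonicAt_congr_nhds hev).1 hGψ.harmonicAt_re

/-! ### Martin functions as real parts of conformal maps -/

open InnerProductSpace in
/-- In the coordinate `φ`, a Martin function is a multiple of the Poisson kernel with pole at the point
`e` corresponding to `∞`. In particular it is unique up to a positive factor. -/
lemma martin_eq_poisson {Ω : Set ℂ} (hΩo : IsOpen Ω) {φ : ℂ → ℂ}
    (hφ : DifferentiableOn ℂ φ Ω) (hφi : InjOn φ Ω) (hφs : φ '' Ω = ball 0 1)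
    {e : ℂ} (he : ‖e‖ = 1) (hlim : ∀ δ > 0, ∃ R : ℝ, ∀ z ∈ Ω, R < ‖z‖ → ‖φ z - e‖ < δ)
    {p : ℂ} (hp : p ∈ Ω) (hp0 : φ p = 0)
    {u : ℂ → ℝ} (hpos : ∀ z ∈ Ω, 0 < u z) (hharm : HarmonicOnNhd u Ω)
    (hcont : ContinuousOn u (closure Ω)) (hzero : ∀ z ∈ frontier Ω, u z = 0) :
    ∀ z ∈ Ω, u z = u p * ((e + φ z) / (e - φ z)).re := by
  have hφm : MapsTo φ Ω (ball 0 1) := fun z hz => hφs ▸ mem_image_of_mem φ hz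
  obtain ⟨ψ, hψ, hψφ⟩ := exists_holomorphic_inverse hΩo hφ hφi
  rw [hφs] at hψ
  have hφψ : ∀ w ∈ ball (0 : ℂ) 1, ψ w ∈ Ω ∧ φ (ψ w) = w := by
    intro w hw
    rw [← hφs] at hw
    obtain ⟨z, hz, rfl⟩ := hw
    rw [hψφ z hz]; exact ⟨hz, rfl⟩
  have hw : HarmonicOnNhd (u ∘ ψ) (ball 0 1) :=
    harmonicOnNhd_comp hΩo isOpen_ball hharm hψ fun w hw => (hφψ w hw).1
  intro z hz
  have := harmonic_eq_poisson_of_concentrated hw (fun w hw => (hpos _ (hφψ w hw).1).le) he ?_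
    (mem_ball_zero_iff.1 (hφm hz))
  · rwa [Function.comp, hψφ z hz, Function.comp, ← hp0, hψφ p hp] at this
  intro δ hδ η hη
  obtain ⟨R, hR⟩ := hlim δ hδ
  -- `u ≥ η` on bounded sets happens only on a compact subset of `Ω`
  set K : Set ℂ := (closure Ω ∩ u ⁻¹' Ici η) ∩ closedBall 0 R with hK
  have hKc : IsCompact K := (isCompact_closedBall 0 R).inter_left
    (hcont.preimage_isClosed_of_isClosed isClosed_closure isClosed_Ici)
  have hKΩ : K ⊆ Ω := by
    rintro x ⟨⟨hx1, hx2⟩, -⟩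
    by_contra hxn
    have h0 := hzero x (by rw [hΩo.frontier_eq]; exact ⟨hx1, hxn⟩)
    rw [mem_preimage, h0, mem_Ici] at hx2
    linarith
  obtain ⟨ρ, hρ1, hρ⟩ : ∃ ρ < 1, ∀ x ∈ K, ‖φ x‖ ≤ ρ := by
    rcases K.eq_empty_or_nonempty with h | h
    · exact ⟨0, by norm_num, by simp [h]⟩
    · obtain ⟨x, hx, hmax⟩ := hKc.exists_isMaxOn h (hφ.continuousOn.mono hKΩ).norm
      exact ⟨‖φ x‖, mem_ball_zero_iff.1 (hφm (hKΩ hx)), fun y hy => hmax hy⟩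
  refine ⟨ρ, hρ1, fun ζ h1 h2 h3 => ?_⟩
  obtain ⟨h4, h5⟩ := hφψ ζ (mem_ball_zero_iff.2 h2)
  by_contra! hlt
  have h6 : ‖ψ ζ‖ ≤ R := by
    by_contra! h
    have := hR _ h4 h
    rw [h5] at this; linarith
  have := hρ (ψ ζ) ⟨⟨subset_closure h4, hlt.le⟩, mem_closedBall_zero_iff.2 h6⟩
  rw [h5] at this; linarith

open InnerProductSpace in
/-- A Martin function on `Ω` is the real part of a univalent `F` that commutes with conjugation and
tends to `∞` at `∞`. The symmetry of `F` comes from the uniqueness of the Martin function. -/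
lemma exists_conformal_of_martin {Ω : Set ℂ} (hΩo : IsOpen Ω) (hΩconv : Convex ℝ Ω)
    (hsub : Ω ⊆ {z : ℂ | 0 < z.re}) (haxis : ∀ x : ℝ, 0 < x → (x : ℂ) ∈ Ω)
    (hsym : ∀ z : ℂ, z ∈ Ω ↔ (starRingEnd ℂ) z ∈ Ω)
    {u : ℂ → ℝ} (hpos : ∀ z ∈ Ω, 0 < u z) (hharm : HarmonicOnNhd u Ω)
    (hcont : ContinuousOn u (closure Ω)) (hzero : ∀ z ∈ frontier Ω, u z = 0) :
    ∃ F : ℂ → ℂ, DifferentiableOn ℂ F Ω ∧ InjOn F Ω ∧ (∀ z ∈ Ω, u z = (F z).re) ∧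
      (∀ z ∈ Ω, F (conj z) = conj (F z)) ∧
      ∀ M : ℝ, ∃ R : ℝ, ∀ z ∈ Ω, R < ‖z‖ → M < ‖F z‖ := by
  have h1Ω : (1 : ℂ) ∈ Ω := by simpa using haxis 1 one_pos
  have h2Ω : (2 : ℂ) ∈ Ω := by simpa using haxis 2 two_pos
  have hden : ∀ z ∈ Ω, z + 1 ≠ 0 := by
    intro z hz h
    have h1 : 0 < z.re := hsub hz
    have h2 := congrArg Complex.re h
    simp at h2; linarith
  obtain ⟨φ, hφ, hφi, hφs⟩ := exists_riemann_map hΩo hΩconv h1Ω h2Ω (by norm_num)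
    (f₁ := fun z => (z - 1) / (z + 1))
    (DifferentiableOn.div (by fun_prop) (by fun_prop) hden)
    (by
      intro a ha b hb hab
      have h1 := hden a ha
      have h2 := hden b hb
      simp only at hab
      rw [div_eq_div_iff h1 h2] at hab
      linear_combination hab / 2)
    (by
      intro z hz
      rw [mem_ball_zero_iff, norm_div, div_lt_one (norm_pos_iff.2 (hden z hz))]
      have h1 : 0 < z.re := hsub hz
      refine lt_of_pow_lt_pow_left₀ 2 (norm_nonneg _) ?_
      rw [Complex.sq_norm, Complex.sq_norm, Complex.normSq_apply, Complex.normSq_apply]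
      simp
      nlinarith)
    (by simp)
  have hφm : MapsTo φ Ω (ball 0 1) := fun z hz => hφs ▸ mem_image_of_mem φ hz
  obtain ⟨e, he, hlim⟩ := exists_limit_at_infty hΩo hΩconv hsub haxis hsym hφ hφi hφs
  obtain ⟨p, hp, hp0⟩ : (0 : ℂ) ∈ φ '' Ω := by rw [hφs]; simp
  have hu := martin_eq_poisson hΩo hφ hφi hφs he hlim hp hp0 hpos hharm hcont hzero
  have hc : 0 < u p := hpos p hp
  have hne : ∀ z ∈ Ω, e - φ z ≠ 0 := by
    intro z hz h
    rw [sub_eq_zero] at h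
    have := mem_ball_zero_iff.1 (hφm hz)
    rw [← h, he] at this; linarith
  set G : ℂ → ℂ := fun z => (u p : ℂ) * ((e + φ z) / (e - φ z)) with hG
  have hGd : DifferentiableOn ℂ G Ω :=
    ((hφ.const_add e).div (hφ.const_sub e) hne).const_mul _
  have huG : ∀ z ∈ Ω, u z = (G z).re := by
    intro z hz
    rw [hu z hz, hG, Complex.re_ofReal_mul]
  -- the conjugate function has the same Poisson representation, up to a constant that is `1`
  have hconjd : ∀ f : ℂ → ℂ, DifferentiableOn ℂ f Ω →
      DifferentiableOn ℂ (fun z => conj (f (conj z))) Ω := by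
    intro f hf z hz
    have h1 : DifferentiableAt ℂ f (conj z) :=
      (hf _ ((hsym z).1 hz)).differentiableAt (hΩo.mem_nhds ((hsym z).1 hz))
    have h2 := h1.conj_conj
    rw [Complex.conj_conj] at h2
    exact h2.differentiableWithinAt
  have hclos : ∀ z ∈ closure Ω, conj z ∈ closure Ω := fun z hz =>
    map_mem_closure Complex.continuous_conj hz fun w hw => (hsym w).1 hw
  have husym : ∀ z ∈ Ω, u (conj z) = u z := by
    have hu' := martin_eq_poisson hΩo hφ hφi hφs he hlim hp hp0 (u := fun z => u (conj z))
      (fun z hz => hpos _ ((hsym z).1 hz)) ?_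
      (hcont.comp Complex.continuous_conj.continuousOn hclos) ?_
    · intro z hz
      have h1 := hu' 1 h1Ω
      have h2 := hu 1 h1Ω
      simp only [map_one] at h1
      have h3 : 0 < u 1 := hpos 1 h1Ω
      have h4 : ((e + φ 1) / (e - φ 1)).re ≠ 0 := by
        intro h; rw [h, mul_zero] at h2; linarith
      have h5 : u (conj p) = u p := mul_right_cancel₀ h4 (by rw [← h1, ← h2])
      rw [hu' z hz, h5, ← hu z hz]
    · intro z hz
      have h1 : AnalyticAt ℂ (fun z => conj (G (conj z))) z :=
        (hconjd G hGd).analyticAt (hΩo.mem_nhds hz)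
      refine (harmonicAt_congr_nhds ?_).1 h1.harmonicAt_re
      filter_upwards [hΩo.mem_nhds hz] with w hw
      rw [Complex.conj_re, huG _ ((hsym w).1 hw)]
    · intro z hz
      rw [hΩo.frontier_eq] at hz
      refine hzero _ ?_
      rw [hΩo.frontier_eq]
      exact ⟨hclos z hz.1, fun h => hz.2 ((hsym z).2 h)⟩
  -- the imaginary constant in `F` is normalised by `F 1 ∈ ℝ`
  set F : ℂ → ℂ := fun z => G z - (G 1).im * Complex.I with hF
  have hFd : DifferentiableOn ℂ F Ω := hGd.sub_const _
  have huF : ∀ z ∈ Ω, u z = (F z).re := by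
    intro z hz
    rw [huG z hz, hF]; simp
  refine ⟨F, hFd, ?_, huF, ?_, ?_⟩
  · intro a ha b hb hab
    simp only [hF, hG, sub_left_inj] at hab
    have h0 : (u p : ℂ) ≠ 0 := by exact_mod_cast hc.ne'
    have h1 := mul_left_cancel₀ h0 hab
    rw [div_eq_div_iff (hne a ha) (hne b hb)] at h1
    have he0 : e ≠ 0 := by rw [← norm_pos_iff, he]; exact one_pos
    exact hφi ha hb (mul_left_cancel₀ he0 (by linear_combination h1 / 2))
  · set D : ℂ → ℂ := fun z => conj (F (conj z)) - F z with hD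
    have hDd : DifferentiableOn ℂ D Ω := (hconjd F hFd).sub hFd
    have hDre : ∀ z ∈ Ω, (D z).re = 0 := by
      intro z hz
      rw [hD, Complex.sub_re, Complex.conj_re, ← huF _ ((hsym z).1 hz), ← huF _ hz, husym z hz,
        sub_self]
    have hD1 : D 1 = 0 := by
      apply Complex.ext
      · simpa using hDre 1 h1Ω
      · simp [hD, hF]
    have hDz : ∀ z ∈ Ω, D z = 0 := by
      rcases (hDd.analyticOnNhd hΩo).is_constant_or_isOpen hΩconv.isPreconnected with h | h
      · obtain ⟨c, hc⟩ := h
        intro z hz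
        rw [hc z hz, ← hc 1 h1Ω, hD1]
      · exfalso
        have h1 := h Ω subset_rfl hΩo
        obtain ⟨ε, hε, hb⟩ := Metric.isOpen_iff.1 h1 0 ⟨1, h1Ω, hD1⟩
        obtain ⟨z, hz, hz2⟩ := hb (show ((ε / 2 : ℝ) : ℂ) ∈ ball 0 ε by
          rw [mem_ball_zero_iff, Complex.norm_real, Real.norm_of_nonneg (by positivity)]
          linarith)
        have := hDre z hz
        rw [hz2, Complex.ofReal_re] at this
        linarith
    intro z hz
    have := hDz z hz
    rw [hD, sub_eq_zero] at this
    rw [← this, Complex.conj_conj]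
  · intro M
    set N := |M| + |(G 1).im| + 1 with hN
    have hNpos : 0 < N := by positivity
    obtain ⟨R, hR⟩ := hlim (min 1 (u p / N)) (by positivity)
    refine ⟨R, fun z hz hzR => ?_⟩
    have h1 := hR z hz hzR
    have h2 : ‖φ z - e‖ < 1 := h1.trans_le (min_le_left _ _)
    have h3 : ‖φ z - e‖ < u p / N := h1.trans_le (min_le_right _ _)
    rw [norm_sub_rev] at h2 h3
    have h0 : 0 < ‖e - φ z‖ := norm_pos_iff.2 (hne z hz)
    have h4 : 1 ≤ ‖e + φ z‖ := by
      have h5 : (2 : ℂ) * e = (e + φ z) + (e - φ z) := by ring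
      have h6 : ‖(2 : ℂ) * e‖ = 2 := by rw [norm_mul, he]; simp
      have h7 := norm_add_le (e + φ z) (e - φ z)
      rw [← h5, h6] at h7
      linarith
    have h5 : N < ‖G z‖ := by
      rw [hG, norm_mul, norm_div, Complex.norm_real, Real.norm_of_nonneg hc.le]
      rw [lt_div_iff₀ hNpos] at h3
      rw [← mul_div_assoc, lt_div_iff₀ h0]
      nlinarith
    have h6 : ‖G z‖ - ‖((G 1).im : ℂ) * Complex.I‖ ≤ ‖F z‖ := norm_sub_norm_le _ _
    have h8 : ‖((G 1).im : ℂ) * Complex.I‖ = |(G 1).im| := by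
      rw [norm_mul, Complex.norm_real, Complex.norm_I, mul_one, Real.norm_eq_abs]
    rw [h8] at h6
    have h7 := le_abs_self M
    linarith

/-! ### Minimum principle and the barrier at infinity -/

lemma re_eventually_eq_of_isLocalMin {g : ℂ → ℂ} {z : ℂ}
    (hd : ∀ᶠ x in 𝓝 z, DifferentiableAt ℂ g x) (hmin : ∀ᶠ x in 𝓝 z, (g z).re ≤ (g x).re) :
    ∀ᶠ x in 𝓝 z, (g x).re = (g z).re := by
  have h1 : ∀ᶠ x in 𝓝 z, DifferentiableAt ℂ (fun x => Complex.exp (-g x)) x :=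
    hd.mono fun x hx => hx.neg.cexp
  have h2 : IsLocalMax (norm ∘ fun x => Complex.exp (-g x)) z := by
    filter_upwards [hmin] with x hx
    simpa [Complex.norm_exp] using hx
  filter_upwards [Complex.eventually_eq_of_isLocalMax_norm h1 h2] with x hx
  have := congrArg norm hx
  simpa [Complex.norm_exp] using this

/-- Minimum principle for an open set `V` that may be unbounded: the bound `c` off a compact subset
of `V` plays the role of the boundary condition. A value below `c` would yield a nonempty compact
set of minimum points which is open and closed in the plane. -/
lemma le_re_of_lt_re_off_compact {V K : Set ℂ} (hV : IsOpen V) (hK : IsCompact K) (hKV : K ⊆ V)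
    {g : ℂ → ℂ} (hg : DifferentiableOn ℂ g V) {c : ℝ} (hc : ∀ z ∈ V, z ∉ K → c < (g z).re) :
    ∀ z ∈ V, c ≤ (g z).re := by
  by_contra! hcon
  obtain ⟨z₀, hz₀, hlt⟩ := hcon
  have hz₀K : z₀ ∈ K := by
    by_contra h
    exact (hc z₀ hz₀ h).not_gt hlt
  have hre : ContinuousOn (fun z => (g z).re) V :=
    Complex.continuous_re.comp_continuousOn hg.continuousOn
  obtain ⟨z₁, hz₁, hmin⟩ := hK.exists_isMinOn ⟨z₀, hz₀K⟩ (hre.mono hKV)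
  have hm : (g z₁).re < c := (hmin hz₀K : (g z₁).re ≤ (g z₀).re).trans_lt hlt
  have hglob : ∀ z ∈ V, (g z₁).re ≤ (g z).re := by
    intro z hz
    by_cases h : z ∈ K
    · exact hmin h
    · exact (hm.trans (hc z hz h)).le
  set S : Set ℂ := K ∩ (fun z => (g z).re) ⁻¹' {(g z₁).re} with hS
  have hSc : IsClosed S :=
    (hre.mono hKV).preimage_isClosed_of_isClosed hK.isClosed isClosed_singleton
  have hSo : IsOpen S := by
    rw [isOpen_iff_mem_nhds]
    rintro z ⟨hzK, hz⟩
    have hz' : (g z).re = (g z₁).re := hz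
    have hzV := hV.mem_nhds (hKV hzK)
    filter_upwards [re_eventually_eq_of_isLocalMin (g := g) (z := z)
      (by filter_upwards [hV.eventually_mem (hKV hzK)] with x hx
          exact (hg x hx).differentiableAt (hV.mem_nhds hx))
      (by filter_upwards [hzV] with x hx
          rw [hz']; exact hglob x hx), hzV] with x hx hxV
    have h1 : (g x).re = (g z₁).re := hx.trans hz'
    refine ⟨?_, h1⟩
    by_contra h
    have := hc x hxV h
    linarith
  have huniv : S = univ := IsClopen.eq_univ ⟨hSc, hSo⟩ ⟨z₁, hz₁, rfl⟩
  have hSK : IsCompact S := hK.of_isClosed_subset hSc inter_subset_left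
  rw [huniv] at hSK
  exact noncompact_univ ℂ hSK

/-- Strong minimum principle for the real part of a holomorphic function. -/
lemma re_eq_zero_of_nonneg {V : Set ℂ} (hV : IsOpen V) (hVc : IsPreconnected V) {g : ℂ → ℂ}
    (hg : DifferentiableOn ℂ g V) (hnn : ∀ z ∈ V, 0 ≤ (g z).re) {z₀ : ℂ} (hz₀ : z₀ ∈ V)
    (h0 : (g z₀).re = 0) : ∀ z ∈ V, (g z).re = 0 := by
  have h1 : DifferentiableOn ℂ (fun x => Complex.exp (-g x)) V := hg.neg.cexp
  have h2 : IsMaxOn (norm ∘ fun x => Complex.exp (-g x)) V z₀ := by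
    intro x hx
    simpa [Complex.norm_exp, h0] using hnn x hx
  intro z hz
  have := congrArg norm (Complex.eqOn_of_isPreconnected_of_isMaxOn_norm hVc hV h1 hz₀ h2 hz)
  simpa [Complex.norm_exp, h0] using this

/-- A Phragmén-Lindelöf barrier on a set which `F` maps into a quadrant, where `σ = ±1` says which:
`-σ i F ^ 2` has values in the right half plane, so the real part of its power `3 / 4` is comparable
to `|F| ^ (3 / 2)` and dominates `|F|` at infinity. -/
lemma exists_barrier {V : Set ℂ} {F : ℂ → ℂ} (hF : DifferentiableOn ℂ F V)
    (hre : ∀ z ∈ V, 0 < (F z).re) {σ : ℝ} (hσ : |σ| = 1) (him : ∀ z ∈ V, 0 < σ * (F z).im) :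
    ∃ B : ℂ → ℂ, DifferentiableOn ℂ B V ∧ (∀ z ∈ V, 0 ≤ (B z).re) ∧
      ∀ ε > 0, ∃ M : ℝ, ∀ z ∈ V, M < ‖F z‖ → ‖F z‖ ≤ ε * (B z).re := by
  set Q : ℂ → ℂ := fun z => -(σ * Complex.I) * F z ^ 2 with hQ
  have hQre : ∀ z ∈ V, 0 < (Q z).re := by
    intro z hz
    have h1 : (Q z).re = 2 * ((F z).re * (σ * (F z).im)) := by
      simp [hQ, pow_two]; ring
    rw [h1]
    have := hre z hz
    have := him z hz
    positivity
  have hQn : ∀ z, ‖Q z‖ = ‖F z‖ ^ 2 := by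
    intro z
    simp [hQ, hσ]
  have hQs : ∀ z ∈ V, Q z ∈ Complex.slitPlane := fun z hz => Or.inl (hQre z hz)
  set c₀ := Real.cos (3 * Real.pi / 8) with hc₀
  have hpi := Real.pi_pos
  have hc₀pos : 0 < c₀ := Real.cos_pos_of_mem_Ioo ⟨by linarith, by linarith⟩
  set B : ℂ → ℂ := fun z => Q z ^ ((3 / 4 : ℝ) : ℂ) with hB
  have hBre : ∀ z ∈ V, c₀ * (‖F z‖ * √‖F z‖) ≤ (B z).re := by
    intro z hz
    have hne : Q z ≠ 0 := Complex.slitPlane_ne_zero (hQs z hz)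
    have h1 : (B z).re = ‖Q z‖ ^ (3 / 4 : ℝ) * Real.cos ((Q z).arg * (3 / 4)) := by
      rw [hB, Complex.cpow_ofReal_re]
    have harg := abs_lt.1 (Complex.abs_arg_lt_pi_div_two_iff.2 (Or.inl (hQre z hz)))
    have h2 : c₀ ≤ Real.cos ((Q z).arg * (3 / 4)) := by
      rw [← Real.cos_abs ((Q z).arg * (3 / 4))]
      refine Real.cos_le_cos_of_nonneg_of_le_pi (abs_nonneg _) (by linarith) ?_
      exact abs_le.2 ⟨by linarith [harg.1], by linarith [harg.2]⟩
    have h3 : ‖Q z‖ ^ (3 / 4 : ℝ) = ‖F z‖ * √‖F z‖ := by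
      have hFpos : 0 < ‖F z‖ := by
        have := hQn z
        have h4 := norm_pos_iff.2 hne
        by_contra h
        have h5 : ‖F z‖ = 0 := le_antisymm (not_lt.1 h) (norm_nonneg _)
        rw [this, h5] at h4; norm_num at h4
      rw [hQn, ← Real.rpow_natCast, ← Real.rpow_mul hFpos.le, Real.sqrt_eq_rpow]
      nth_rewrite 2 [← Real.rpow_one ‖F z‖]
      rw [← Real.rpow_add hFpos]
      norm_num
    rw [h1, h3, mul_comm]
    exact mul_le_mul_of_nonneg_left h2 (by positivity)
  refine ⟨B, ?_, fun z hz => le_trans (by positivity) (hBre z hz), fun ε hε => ?_⟩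
  · intro z hz
    exact (((hF z hz).pow 2).const_mul _).cpow (differentiableWithinAt_const _) (hQs z hz)
  · refine ⟨(1 / (ε * c₀)) ^ 2, fun z hz hM => ?_⟩
    have h1 : 1 / (ε * c₀) ≤ √‖F z‖ := Real.le_sqrt_of_sq_le hM.le
    rw [div_le_iff₀ (by positivity)] at h1
    have h2 := mul_le_mul_of_nonneg_left (hBre z hz) hε.le
    have h3 := mul_le_mul_of_nonneg_left h1 (norm_nonneg (F z))
    nlinarith

/-! ### Comparison with the reflected function -/

lemma exists_sign_im {V : Set ℂ} (hV : IsPreconnected V) {F : ℂ → ℂ} (hF : ContinuousOn F V)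
    (him : ∀ z ∈ V, (F z).im ≠ 0) : ∃ σ : ℝ, |σ| = 1 ∧ ∀ z ∈ V, 0 < σ * (F z).im := by
  by_cases h : ∀ z ∈ V, 0 < (F z).im
  · exact ⟨1, by simp, by simpa using h⟩
  · push Not at h
    obtain ⟨z₀, hz₀, h0⟩ := h
    refine ⟨-1, by simp, fun z hz => ?_⟩
    by_contra! h1
    obtain ⟨x, hx, hx0⟩ := hV.intermediate_value hz₀ hz
      (Complex.continuous_im.comp_continuousOn hF)
      (show (0 : ℝ) ∈ Icc (F z₀).im (F z).im from ⟨h0, by linarith⟩)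
    exact him x hx hx0

/-- Reflection in the line `Im z = t` maps the part of `Ω` above that line into `Ω`. -/
lemma reflect_mem {Ω : Set ℂ} (hΩconv : Convex ℝ Ω)
    (hsym : ∀ z : ℂ, z ∈ Ω ↔ (starRingEnd ℂ) z ∈ Ω) {t : ℝ} (ht : 0 < t) {z : ℂ} (hz : z ∈ Ω)
    (htz : t ≤ z.im) : conj z + 2 * t * Complex.I ∈ Ω := by
  have := mem_of_abs_im_le hΩconv hsym (x := z.re) (y := z.im) (y' := 2 * t - z.im) hz
    (abs_le_abs (by linarith) (by linarith))
  convert this using 1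
  apply Complex.ext
  · simp
  · simp; ring

lemma conj_closure {Ω : Set ℂ} (hsym : ∀ z : ℂ, z ∈ Ω ↔ (starRingEnd ℂ) z ∈ Ω) (z : ℂ) :
    z ∈ closure Ω ↔ (starRingEnd ℂ) z ∈ closure Ω := by
  have h : ∀ z ∈ closure Ω, conj z ∈ closure Ω := fun z hz =>
    map_mem_closure Complex.continuous_conj hz fun w hw => (hsym w).1 hw
  exact ⟨h z, fun hz => by simpa using h _ hz⟩

/-- The function `u` reflected in the line `Im z = t` is the real part of the holomorphic function
`z ↦ F (z - 2 t i)`, by the symmetry of `F`. -/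
lemma reflection_eq {Ω : Set ℂ} (hΩconv : Convex ℝ Ω)
    (hsym : ∀ z : ℂ, z ∈ Ω ↔ (starRingEnd ℂ) z ∈ Ω) {u : ℂ → ℝ} {F : ℂ → ℂ}
    (huF : ∀ z ∈ Ω, u z = (F z).re) (hFsym : ∀ z ∈ Ω, F (conj z) = conj (F z)) {t : ℝ}
    (ht : 0 < t) {z : ℂ} (hz : z ∈ Ω) (htz : t ≤ z.im) :
    z - 2 * t * Complex.I ∈ Ω ∧
      u (conj z + 2 * t * Complex.I) = (F (z - 2 * t * Complex.I)).re := by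
  have h1 := reflect_mem hΩconv hsym ht hz htz
  have h2 : conj (conj z + 2 * t * Complex.I) = z - 2 * t * Complex.I := by
    apply Complex.ext
    · simp
    · simp; ring
  have h3 := (hsym _).1 h1
  have h4 := hFsym _ h1
  rw [h2] at h3 h4
  exact ⟨h3, by rw [huF _ h1, h4, Complex.conj_re]⟩

/-- Above the line `Im z = t`, the function `u` is at most its reflection in that line. On the
boundary of the upper part the difference is nonnegative; at infinity it is at least `-|F|`, which
the barrier absorbs because `F` maps the upper part into a quadrant. -/
lemma le_reflection {Ω : Set ℂ} (hΩo : IsOpen Ω) (hΩconv : Convex ℝ Ω)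
    (hsym : ∀ z : ℂ, z ∈ Ω ↔ (starRingEnd ℂ) z ∈ Ω)
    {u : ℂ → ℝ} (hpos : ∀ z ∈ Ω, 0 < u z)
    (hcont : ContinuousOn u (closure Ω)) (hzero : ∀ z ∈ frontier Ω, u z = 0)
    {F : ℂ → ℂ} (hF : DifferentiableOn ℂ F Ω) (hFi : InjOn F Ω)
    (huF : ∀ z ∈ Ω, u z = (F z).re) (hFsym : ∀ z ∈ Ω, F (conj z) = conj (F z))
    (hFinf : ∀ M : ℝ, ∃ R : ℝ, ∀ z ∈ Ω, R < ‖z‖ → M < ‖F z‖) {t : ℝ} (ht : 0 < t) {z : ℂ}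
    (hz : z ∈ Ω) (htz : t < z.im) : u z ≤ u (conj z + 2 * t * Complex.I) := by
  set V : Set ℂ := Ω ∩ {z | t < z.im} with hV
  have hVo : IsOpen V := hΩo.inter (isOpen_lt continuous_const Complex.continuous_im)
  have hVc : IsPreconnected V := by
    refine (hΩconv.inter ?_).isPreconnected
    exact convex_halfSpace_im_gt t
  have hFV : DifferentiableOn ℂ F V := hF.mono inter_subset_left
  obtain ⟨σ, hσ, hσim⟩ := exists_sign_im hVc hFV.continuousOn (by
    rintro x ⟨hx, hxt⟩ h
    have h1 : conj (F x) = F x := Complex.conj_eq_iff_im.2 h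
    have h2 := hFi ((hsym x).1 hx) hx ((hFsym x hx).trans h1)
    have h3 := Complex.conj_eq_iff_im.1 h2
    have h4 : t < x.im := hxt
    linarith)
  obtain ⟨B, hBd, hBnn, hBinf⟩ := exists_barrier hFV
    (fun x hx => by rw [← huF x hx.1]; exact hpos x hx.1) hσ hσim
  have hunn : ∀ x ∈ closure Ω, 0 ≤ u x := by
    intro x hx
    by_cases h : x ∈ Ω
    · exact (hpos x h).le
    · exact (hzero x (by rw [hΩo.frontier_eq]; exact ⟨hx, h⟩)).ge
  set W : ℂ → ℝ := fun x => u (conj x + 2 * t * Complex.I) - u x with hW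
  have hrefl : MapsTo (fun x : ℂ => conj x + 2 * t * Complex.I) (closure Ω ∩ {x | t ≤ x.im})
      (closure Ω) := fun x hx =>
    reflect_mem hΩconv.closure (conj_closure hsym) ht hx.1 hx.2
  have hWc : ContinuousOn W (closure Ω ∩ {x | t ≤ x.im}) := by
    refine ContinuousOn.sub ?_ (hcont.mono inter_subset_left)
    refine hcont.comp (Continuous.continuousOn ?_) hrefl
    exact Complex.continuous_conj.add continuous_const
  have main : ∀ ε > 0, -ε ≤ W z + ε * (B z).re := by
    intro ε hε
    obtain ⟨M, hM⟩ := hBinf ε hε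
    obtain ⟨R, hR⟩ := hFinf M
    -- `K` is compact by definition and misses the boundary of `V`, since `W ≥ 0` there
    set K : Set ℂ := ((closure Ω ∩ {x | t ≤ x.im}) ∩ W ⁻¹' Iic (-ε)) ∩ closedBall 0 R with hK
    have hKc : IsCompact K := (isCompact_closedBall 0 R).inter_left
      (hWc.preimage_isClosed_of_isClosed (isClosed_closure.inter
        (isClosed_le continuous_const Complex.continuous_im)) isClosed_Iic)
    have hKV : K ⊆ V := by
      rintro x ⟨⟨⟨hx1, hx2⟩, hx3⟩, -⟩
      have hx3' : W x ≤ -ε := hx3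
      have hx2' : t ≤ x.im := hx2
      refine ⟨?_, ?_⟩
      · by_contra h
        have h1 := hzero x (by rw [hΩo.frontier_eq]; exact ⟨hx1, h⟩)
        have h2 := hunn _ (hrefl ⟨hx1, hx2⟩)
        simp only [hW, h1] at hx3'
        simp only at h2
        linarith
      · refine lt_of_le_of_ne hx2' fun h => ?_
        have h1 : conj x + 2 * t * Complex.I = x := by
          apply Complex.ext
          · simp
          · simp [h]; ring
        simp only [hW, h1] at hx3'
        linarith
    set g : ℂ → ℂ := fun x => F (x - 2 * t * Complex.I) - F x + ε * B x with hg
    have hgd : DifferentiableOn ℂ g V := by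
      refine ((hF.comp (by fun_prop) fun x hx => ?_).sub hFV).add (hBd.const_mul _)
      exact (reflection_eq hΩconv hsym huF hFsym ht hx.1 (le_of_lt hx.2)).1
    have hgre : ∀ x ∈ V, (g x).re = W x + ε * (B x).re := by
      intro x hx
      simp only [hg, hW]
      rw [(reflection_eq hΩconv hsym huF hFsym ht hx.1 (le_of_lt hx.2)).2, huF x hx.1]
      simp
    rw [← hgre z ⟨hz, htz⟩]
    refine le_re_of_lt_re_off_compact hVo hKc hKV hgd (fun x hx hxK => ?_) z ⟨hz, htz⟩
    rw [hgre x hx]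
    have h0 := mul_nonneg hε.le (hBnn x hx)
    have hxt : t ≤ x.im := le_of_lt hx.2
    by_cases h : -ε < W x
    · linarith
    · have hxR : R < ‖x‖ := by
        by_contra hxR
        exact hxK ⟨⟨⟨subset_closure hx.1, hxt⟩, not_lt.1 h⟩,
          mem_closedBall_zero_iff.2 (not_lt.1 hxR)⟩
      have h1 := hM x hx (hR x hx.1 hxR)
      have h2 : u x ≤ ‖F x‖ := by rw [huF x hx.1]; exact Complex.re_le_norm _
      have h3 := hunn _ (hrefl ⟨subset_closure hx.1, hxt⟩)
      simp only [hW] at h3 ⊢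
      linarith
  by_contra! hlt
  have hWz : W z < 0 := sub_neg.2 hlt
  have hBz := hBnn z ⟨hz, htz⟩
  have h1 := main (-W z / (2 * (1 + (B z).re))) (div_pos (by linarith) (by linarith))
  have h2 : -W z / (2 * (1 + (B z).re)) * (1 + (B z).re) = -W z / 2 := by
    field_simp
  linarith

/-- If `Ω` is not the half plane then all its vertical slices are bounded: convexity propagates an
unbounded slice to all the others. -/
lemma bddAbove_slice {Ω : Set ℂ} (hΩo : IsOpen Ω) (hΩconv : Convex ℝ Ω)
    (hsub : Ω ⊆ {z : ℂ | 0 < z.re}) (haxis : ∀ x : ℝ, 0 < x → (x : ℂ) ∈ Ω)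
    (hsym : ∀ z : ℂ, z ∈ Ω ↔ (starRingEnd ℂ) z ∈ Ω) (hne : Ω ≠ {z : ℂ | 0 < z.re})
    {x : ℝ} (hx : 0 < x) : BddAbove {y : ℝ | (⟨x, y⟩ : ℂ) ∈ Ω} := by
  by_contra hb
  refine hne (hsub.antisymm fun z hz => ?_)
  have ha : 0 < z.re := hz
  -- a segment from `m / 2` to a high point above `x` passes over `m + i |Im z|`, and `Re z ≥ m`
  set m := min z.re x with hm
  have hm0 : 0 < m := lt_min ha hx
  have hmx : m ≤ x := min_le_right _ _
  set l := (m - m / 2) / (x - m / 2) with hl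
  have hl0 : 0 < l := div_pos (by linarith) (by linarith)
  have hl1 : l ≤ 1 := (div_le_one (by linarith)).2 (by linarith)
  rw [not_bddAbove_iff] at hb
  obtain ⟨Y, hY, hYb⟩ := hb (|z.im| / l)
  rw [div_lt_iff₀ hl0] at hYb
  have h1 := hΩconv (haxis (m / 2) (by linarith)) hY (a := 1 - l) (b := l) (by linarith) hl0.le
    (by ring)
  have h2 : (1 - l) • ((m / 2 : ℝ) : ℂ) + l • (⟨x, Y⟩ : ℂ) = ⟨m, Y * l⟩ := by
    have h3 : l * (x - m / 2) = m - m / 2 := div_mul_cancel₀ _ (by linarith)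
    apply Complex.ext
    · simp only [Complex.add_re, Complex.real_smul, Complex.re_ofReal_mul, Complex.ofReal_re]
      linarith
    · simp; ring
  rw [h2] at h1
  have h4 := mem_of_abs_im_le hΩconv hsym h1 (y' := z.im) (hYb.le.trans (le_abs_self _))
  have h5 := add_ofReal_mem hΩo hΩconv haxis h4 (sub_nonneg.2 (min_le_left z.re x))
  convert h5 using 1
  apply Complex.ext <;> simp [hm]

/-- Strict version of `le_reflection`. If equality held at one point then `u` would coincide with its
reflection above the line. At the top end of a bounded slice `u` vanishes, while the reflected point
is interior to `Ω`. -/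
lemma lt_reflection {Ω : Set ℂ} (hΩo : IsOpen Ω) (hΩconv : Convex ℝ Ω)
    (hsub : Ω ⊆ {z : ℂ | 0 < z.re}) (haxis : ∀ x : ℝ, 0 < x → (x : ℂ) ∈ Ω)
    (hsym : ∀ z : ℂ, z ∈ Ω ↔ (starRingEnd ℂ) z ∈ Ω)
    {u : ℂ → ℝ} (hpos : ∀ z ∈ Ω, 0 < u z)
    (hcont : ContinuousOn u (closure Ω)) (hzero : ∀ z ∈ frontier Ω, u z = 0)
    {F : ℂ → ℂ} (hF : DifferentiableOn ℂ F Ω) (hFi : InjOn F Ω)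
    (huF : ∀ z ∈ Ω, u z = (F z).re) (hFsym : ∀ z ∈ Ω, F (conj z) = conj (F z))
    (hFinf : ∀ M : ℝ, ∃ R : ℝ, ∀ z ∈ Ω, R < ‖z‖ → M < ‖F z‖)
    (hne : Ω ≠ {z : ℂ | 0 < z.re}) {t : ℝ} (ht : 0 < t) {z : ℂ}
    (hz : z ∈ Ω) (htz : t < z.im) : u z < u (conj z + 2 * t * Complex.I) := by
  have hle : ∀ x ∈ Ω, t < x.im → u x ≤ u (conj x + 2 * t * Complex.I) := fun x hx hxt =>
    le_reflection hΩo hΩconv hsym hpos hcont hzero hF hFi huF hFsym hFinf ht hx hxt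
  refine lt_of_le_of_ne (hle z hz htz) fun heq => ?_
  set V : Set ℂ := Ω ∩ {z | t < z.im} with hV
  have hVo : IsOpen V := hΩo.inter (isOpen_lt continuous_const Complex.continuous_im)
  have hVc : IsPreconnected V := (hΩconv.inter (convex_halfSpace_im_gt t)).isPreconnected
  set g : ℂ → ℂ := fun x => F (x - 2 * t * Complex.I) - F x with hg
  have hgd : DifferentiableOn ℂ g V := by
    refine (hF.comp (by fun_prop) fun x hx => ?_).sub (hF.mono inter_subset_left)
    exact (reflection_eq hΩconv hsym huF hFsym ht hx.1 (le_of_lt hx.2)).1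
  have hgre : ∀ x ∈ V, (g x).re = u (conj x + 2 * t * Complex.I) - u x := by
    intro x hx
    rw [(reflection_eq hΩconv hsym huF hFsym ht hx.1 (le_of_lt hx.2)).2, huF x hx.1, hg,
      Complex.sub_re]
  have hall := re_eq_zero_of_nonneg hVo hVc hgd
    (fun x hx => by rw [hgre x hx]; linarith [hle x hx.1 hx.2]) (z₀ := z) ⟨hz, htz⟩
    (by rw [hgre z ⟨hz, htz⟩, heq, sub_self])
  -- the top of the slice through `z` lies on the frontier, but its reflection lies inside `Ω`
  have hzre : 0 < z.re := hsub hz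
  set S : Set ℝ := {y : ℝ | (⟨z.re, y⟩ : ℂ) ∈ Ω} with hS
  have hSb : BddAbove S := bddAbove_slice hΩo hΩconv hsub haxis hsym hne hzre
  have hzS : z.im ∈ S := hz
  have hmk : Continuous (fun y : ℝ => (⟨z.re, y⟩ : ℂ)) := by
    have : (fun y : ℝ => (⟨z.re, y⟩ : ℂ)) = fun y : ℝ => (z.re : ℂ) + y * Complex.I := by
      funext y; apply Complex.ext <;> simp
    rw [this]; fun_prop
  have hSo : IsOpen S := hΩo.preimage hmk
  set Y := sSup S with hY
  have hlub : IsLUB S Y := isLUB_csSup ⟨_, hzS⟩ hSb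
  have htY : t < Y := htz.trans_le (hlub.1 hzS)
  have hYS : Y ∉ S := by
    intro h
    obtain ⟨ε, hε, hb⟩ := Metric.isOpen_iff.1 hSo Y h
    have h1 : Y + ε / 2 ∈ S := hb (by
      rw [mem_ball, Real.dist_eq, add_sub_cancel_left, abs_of_pos (by positivity)]; linarith)
    have := hlub.1 h1
    linarith
  have hIn : ∀ y : ℝ, |y| < Y → y ∈ S := by
    intro y hy
    obtain ⟨y', hy', hlt, -⟩ := hlub.exists_between hy
    exact mem_of_abs_im_le hΩconv hsym hy' (hlt.le.trans (le_abs_self _))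
  have hclos : ∀ y ∈ Icc t Y, (⟨z.re, y⟩ : ℂ) ∈ closure Ω ∧
      (⟨z.re, 2 * t - y⟩ : ℂ) ∈ closure Ω := by
    have h1 : (⟨z.re, Y⟩ : ℂ) ∈ closure Ω :=
      map_mem_closure hmk (hlub.mem_closure ⟨_, hzS⟩) fun y hy => hy
    intro y hy
    refine ⟨mem_of_abs_im_le hΩconv.closure (conj_closure hsym) h1 ?_,
      mem_of_abs_im_le hΩconv.closure (conj_closure hsym) h1 ?_⟩
    · exact abs_le_abs hy.2 (by linarith [hy.1])
    · exact abs_le_abs (by linarith [hy.1]) (by linarith [hy.2])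
  have heqOn : EqOn (fun y : ℝ => u ⟨z.re, 2 * t - y⟩) (fun y : ℝ => u ⟨z.re, y⟩) (Icc t Y) := by
    refine EqOn.of_subset_closure (s := Ioo t Y) ?_
      (hcont.comp (hmk.comp (continuous_const.sub continuous_id)).continuousOn
        fun y hy => (hclos y hy).2)
      (hcont.comp hmk.continuousOn fun y hy => (hclos y hy).1) Ioo_subset_Icc_self
      (by rw [closure_Ioo htY.ne])
    intro y hy
    have hyV : (⟨z.re, y⟩ : ℂ) ∈ V :=
      ⟨hIn y (by rw [abs_of_pos (ht.trans hy.1)]; exact hy.2), hy.1⟩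
    have h1 := hall _ hyV
    rw [hgre _ hyV] at h1
    have h2 : conj (⟨z.re, y⟩ : ℂ) + 2 * t * Complex.I = ⟨z.re, 2 * t - y⟩ := by
      apply Complex.ext
      · simp
      · simp; ring
    rw [h2] at h1
    exact sub_eq_zero.1 h1
  have h1 : u ⟨z.re, 2 * t - Y⟩ = u ⟨z.re, Y⟩ := heqOn ⟨htY.le, le_rfl⟩
  have h2 : u ⟨z.re, Y⟩ = 0 := hzero _ (by
    rw [hΩo.frontier_eq]
    exact ⟨(hclos Y ⟨htY.le, le_rfl⟩).1, hYS⟩)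
  have h3 := hpos ⟨z.re, 2 * t - Y⟩ (hIn (2 * t - Y) (abs_lt.2 ⟨by linarith, by linarith⟩))
  linarith

/-- For a Martin function on a convex domain in the right half
plane, symmetric about the positive real axis which it contains, the supremum
along each vertical slice `θ_x` is attained at the real point `x`; and if the
domain is not the right half plane, the function strictly decreases along the
slice as one moves away from the real axis. -/
theorem stmt_6 (Ω : Set ℂ) (hΩo : IsOpen Ω) (hΩconv : Convex ℝ Ω)
    (hsub : Ω ⊆ {z : ℂ | 0 < z.re})
    (haxis : ∀ x : ℝ, 0 < x → (x : ℂ) ∈ Ω)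
    (hsym : ∀ z : ℂ, z ∈ Ω ↔ (starRingEnd ℂ) z ∈ Ω)
    (u : ℂ → ℝ)
    (hpos : ∀ z ∈ Ω, 0 < u z)
    (hu2 : ContDiffOn ℝ 2 u Ω)
    (hharm : ∀ z ∈ Ω,
      iteratedFDerivWithin ℝ 2 u Ω z ![(1 : ℂ), (1 : ℂ)]
      + iteratedFDerivWithin ℝ 2 u Ω z ![Complex.I, Complex.I] = 0)
    (hcont : ContinuousOn u (closure Ω))
    (hzero : ∀ z ∈ frontier Ω, u z = 0) :
    (∀ x : ℝ, 0 < x → IsGreatest (u '' (Ω ∩ {z : ℂ | z.re = x})) (u (x : ℂ))) ∧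
    (Ω ≠ {z : ℂ | 0 < z.re} → ∀ x : ℝ, 0 < x → ∀ y₁ y₂ : ℝ,
      0 ≤ y₁ → y₁ < y₂ → (x : ℂ) + y₂ * Complex.I ∈ Ω →
        u ((x : ℂ) + y₂ * Complex.I) < u ((x : ℂ) + y₁ * Complex.I)) := by
  obtain ⟨F, hF, hFi, huF, hFsym, hFinf⟩ := exists_conformal_of_martin hΩo hΩconv hsub haxis hsym
    hpos (harmonicOnNhd_of_iteratedFDerivWithin hΩo hu2 hharm) hcont hzero
  refine ⟨fun x hx => ⟨⟨x, ⟨haxis x hx, Complex.ofReal_re x⟩, rfl⟩, ?_⟩, ?_⟩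
  · have key : ∀ z ∈ Ω, 0 < z.im → u z ≤ u (z.re : ℂ) := by
      intro z hz h
      have := le_reflection hΩo hΩconv hsym hpos hcont hzero hF hFi huF hFsym hFinf
        (t := z.im / 2) (by linarith) hz (by linarith)
      have h2 : conj z + 2 * ((z.im / 2 : ℝ) : ℂ) * Complex.I = (z.re : ℂ) := by
        apply Complex.ext
        · simp
        · simp; ring
      rwa [h2] at this
    rintro _ ⟨z, ⟨hz, hzx⟩, rfl⟩
    have hzx' : z.re = x := hzx
    rw [← hzx']
    rcases lt_trichotomy z.im 0 with h | h | h
    · have h1 := key _ ((hsym z).1 hz) (by simpa using h)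
      rwa [huF _ ((hsym z).1 hz), hFsym z hz, Complex.conj_re, ← huF z hz, Complex.conj_re] at h1
    · rw [show (z.re : ℂ) = z from Complex.ext (by simp) (by simp [h])]
    · exact key z hz h
  · intro hne x hx y₁ y₂ hy₁ hy hz
    have := lt_reflection hΩo hΩconv hsub haxis hsym hpos hcont hzero hF hFi huF hFsym hFinf hne
      (t := (y₁ + y₂) / 2) (by linarith) hz (by simp; linarith)
    have h2 : conj ((x : ℂ) + y₂ * Complex.I) + 2 * (((y₁ + y₂) / 2 : ℝ) : ℂ) * Complex.I
        = (x : ℂ) + y₁ * Complex.I := by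
      apply Complex.ext
      · simp
      · simp; ring
    rwa [h2] at this
end

section
/- Let f : (0,∞) → (0,∞) be a differentiable Lipschitz function with f′(t) → 0 as t → ∞. Let Ω = {(t,Y) ∈ ℝ × ℝ^d : t > 0, |Y| < f(t)}, d ≥ 1, and let u be a Martin function on Ω. Then there exists t₀ > 0 such that for all t > t₀ and all Y ∈ ℝ^d with |Y| < f(t), one has u(t,Y) ≤ u(t,0); that is, the maximum of u on each slice θ_t = Ω ∩ ({t} × ℝ^d) with t > t₀ is attained at (t,0). -/
/-!
Tilted moving planes. Fix `t > 0` and `Y ≠ 0`, put `e = Y / |Y|`, and consider for small `a > 0`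
the hyperplane `⟪e, y⟫ = |Y| / 2 + a (s - t)` in the coordinates `(s, y)`. It passes through the
midpoint of `(t, Y)` and `(t, 0)` and leans outwards as `s` grows.

* Because `f' → 0`, `f` is sublinear (`sublinear`), so the part of `Ω` above the hyperplane is
  bounded (`isCompact_cap`), and no Phragmén–Lindelöf argument at infinity is needed.
* The derivative of `f ^ 2 + s ^ 2` is bounded below (`exists_monotone`), and for `a` small this is
  what makes the reflection `R` in the hyperplane map the part of `Ω` above the hyperplane
  into `Ω` (`mirror_mem`).
* On this part the harmonic function `u ∘ R - u` is nonnegative on the boundary: it vanishes on the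
  hyperplane, and `u = 0` on the frontier of `Ω`. By the weak maximum principle `u ≤ u ∘ R` there
  (`le_mirror`). The maximum principle follows from the second derivative test for
  `u ∘ R - u - ε s ^ 2`, and the Laplacian of `u ∘ R` is handled by the invariance of the trace of
  a bilinear form under a reflection (`trace_mirror`).

As `a → 0`, the image `R (t, Y)` tends to `(t, 0)`, and `u (t, Y) ≤ u (t, 0)` follows by continuity.
-/

open Set Filter Topology

/-- The affine function on `ℝ × ℝ^d` whose zero set is the tilted hyperplane
`⟪e, Y⟫ = b + a t`. -/
noncomputable def tilt {d : ℕ} (a b : ℝ) (e : EuclideanSpace ℝ (Fin d))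
    (x : ℝ × EuclideanSpace ℝ (Fin d)) : ℝ :=
  inner ℝ e x.2 - b - a * x.1

/-- For a unit vector `e`, the Euclidean reflection of `ℝ × ℝ^d` in the hyperplane
`⟪e, Y⟫ = b + a t`, which has normal vector `(-a, e)` of squared length `1 + a²`. With `b = 0` it
is the linear part of this reflection. -/
noncomputable def mirror {d : ℕ} (a b : ℝ) (e : EuclideanSpace ℝ (Fin d))
    (x : ℝ × EuclideanSpace ℝ (Fin d)) : ℝ × EuclideanSpace ℝ (Fin d) :=
  (x.1 + 2 / (1 + a ^ 2) * tilt a b e x * a, x.2 - (2 / (1 + a ^ 2) * tilt a b e x) • e)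

section
variable {d : ℕ}

lemma continuous_tilt (a b : ℝ) (e : EuclideanSpace ℝ (Fin d)) : Continuous (tilt a b e) := by
  unfold tilt; fun_prop

lemma continuous_mirror (a b : ℝ) (e : EuclideanSpace ℝ (Fin d)) : Continuous (mirror a b e) := by
  have := continuous_tilt a b e
  unfold mirror; fun_prop

lemma mirror_add_smul (a b : ℝ) (e : EuclideanSpace ℝ (Fin d))
    (x v : ℝ × EuclideanSpace ℝ (Fin d)) (s : ℝ) :
    mirror a b e (x + s • v) = mirror a b e x + s • mirror a 0 e v := by
  ext1
  · simp [mirror, tilt, inner_add_right, inner_smul_right]; ring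
  · simp only [mirror, tilt, Prod.snd_add, Prod.smul_snd, inner_add_right, inner_smul_right,
      Prod.fst_add, Prod.smul_fst, smul_eq_mul]
    module

/-- The trace of a bilinear form on `ℝ × ℝ^d` in the standard orthonormal basis is invariant under
a linear reflection. -/
lemma trace_mirror (a : ℝ) (e : EuclideanSpace ℝ (Fin d)) (he : ‖e‖ = 1)
    (B : (ℝ × EuclideanSpace ℝ (Fin d)) →L[ℝ] (ℝ × EuclideanSpace ℝ (Fin d)) →L[ℝ] ℝ) :
    B (mirror a 0 e (1, 0)) (mirror a 0 e (1, 0)) + ∑ i : Fin d,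
      B (mirror a 0 e (0, EuclideanSpace.single i 1)) (mirror a 0 e (0, EuclideanSpace.single i 1)) =
    B (1, 0) (1, 0) +
      ∑ i : Fin d, B (0, EuclideanSpace.single i 1) (0, EuclideanSpace.single i 1) := by
  set n : ℝ × EuclideanSpace ℝ (Fin d) := (-a, e) with hn
  set c : ℝ := 2 / (1 + a ^ 2) with hc
  have hca : c * (1 + a ^ 2) = 2 := by rw [hc]; field_simp
  have hes : ∑ i, e i ^ 2 = 1 := by
    have := EuclideanSpace.real_norm_sq_eq e
    rw [he] at this; linarith
  have hsum : n = (-a) • ((1 : ℝ), (0 : EuclideanSpace ℝ (Fin d))) +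
      ∑ i, e i • ((0 : ℝ), EuclideanSpace.single i (1 : ℝ)) := by
    have h2 : ∑ i, e i • EuclideanSpace.single i (1 : ℝ) = e := by
      simpa using (EuclideanSpace.basisFun (Fin d) ℝ).sum_repr e
    ext1
    · simp [hn, Prod.fst_sum]
    · simp only [hn, Prod.snd_add, Prod.smul_snd, smul_zero, zero_add, Prod.snd_sum]
      exact h2.symm
  have h0 : mirror a 0 e ((1 : ℝ), 0) =
      ((1 : ℝ), (0 : EuclideanSpace ℝ (Fin d))) + (c * a) • n := by
    ext1
    · simp [mirror, tilt, hn, hc]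
    · simp [mirror, tilt, hn, hc]
  have hi : ∀ i, mirror a 0 e (0, EuclideanSpace.single i 1) =
      ((0 : ℝ), EuclideanSpace.single i (1 : ℝ)) - (c * e i) • n := by
    intro i
    ext1
    · simp [mirror, tilt, hn, hc, EuclideanSpace.inner_single_right]
    · simp [mirror, tilt, hn, hc, EuclideanSpace.inner_single_right]
  have hl : B n n = -a * B (1, 0) n + ∑ i, e i * B (0, EuclideanSpace.single i 1) n := by
    have h := congrArg (fun w => B w n) hsum
    simpa only [map_add, map_smul, map_sum, add_apply,
      smul_apply, sum_apply, smul_eq_mul] using h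
  have hr : B n n = -a * B n (1, 0) + ∑ i, e i * B n (0, EuclideanSpace.single i 1) := by
    have h := congrArg (fun w => B n w) hsum
    simpa only [map_add, map_smul, map_sum, smul_eq_mul] using h
  rw [h0]
  simp_rw [hi]
  simp only [map_add, map_sub, map_smul, add_apply,
    sub_apply, smul_apply, smul_eq_mul]
  have hexp : ∀ i, B (0, EuclideanSpace.single i 1) (0, EuclideanSpace.single i 1) -
        c * e i * B n (0, EuclideanSpace.single i 1) -
        c * e i * (B (0, EuclideanSpace.single i 1) n - c * e i * B n n) =
      B (0, EuclideanSpace.single i 1) (0, EuclideanSpace.single i 1) -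
        c * (e i * B n (0, EuclideanSpace.single i 1)) -
        c * (e i * B (0, EuclideanSpace.single i 1) n) + c ^ 2 * B n n * e i ^ 2 := by
    intro i; ring
  simp_rw [hexp, Finset.sum_add_distrib, Finset.sum_sub_distrib, ← Finset.mul_sum]
  rw [hes]
  linear_combination (c) * hl + c * hr + c * B n n * hca

/-- At a local minimum the second derivative of a function of one variable is nonnegative. -/
lemma second_deriv_nonneg {g g₁ : ℝ → ℝ} {g₂ : ℝ} (hmin : IsLocalMin g 0)
    (h1 : ∀ᶠ s in 𝓝 0, HasDerivAt g (g₁ s) s) (h2 : HasDerivAt g₁ g₂ 0) : 0 ≤ g₂ := by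
  by_contra! hneg
  have hd : deriv g =ᶠ[𝓝 0] g₁ := h1.mono fun s hs => hs.deriv
  have hdd : deriv (deriv g) 0 = g₂ := by rw [hd.deriv_eq, h2.deriv]
  have hmax : IsLocalMax g 0 := isLocalMax_of_deriv_deriv_neg (by rw [hdd]; exact hneg)
    hmin.deriv_eq_zero h1.self_of_nhds.continuousAt
  -- being both a local minimum and a local maximum, `0` has a neighbourhood where `g` is constant
  have hconst : g =ᶠ[𝓝 0] fun _ => g 0 := by
    filter_upwards [hmin, hmax] with s hs hs'
    exact le_antisymm hs' hs
  have h0 : deriv g =ᶠ[𝓝 0] fun _ => 0 := by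
    filter_upwards [hconst.eventuallyEq_nhds] with s hs
    rw [hs.deriv_eq]; simp
  have : deriv (deriv g) 0 = 0 := by rw [h0.deriv_eq]; simp
  linarith

/-- Restricting a `C²` function to a line gives a twice differentiable function, whose second
derivative is the second Fréchet derivative evaluated at the direction. -/
lemma line_derivs {V : Type*} [NormedAddCommGroup V] [NormedSpace ℝ V] {h : V → ℝ} {x : V}
    (hh : ContDiffAt ℝ 2 h x) (v : V) :
    (∀ᶠ s : ℝ in 𝓝 0, HasDerivAt (fun s : ℝ => h (x + s • v)) (fderiv ℝ h (x + s • v) v) s) ∧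
      HasDerivAt (fun s : ℝ => fderiv ℝ h (x + s • v) v) (fderiv ℝ (fderiv ℝ h) x v v) 0 := by
  have hline : ∀ s : ℝ, HasDerivAt (fun s : ℝ => x + s • v) v s := fun s => by
    simpa using ((hasDerivAt_id s).smul_const v).const_add x
  constructor
  · have hev : ∀ᶠ y in 𝓝 x, DifferentiableAt ℝ h y :=
      (hh.eventually (by simp)).mono fun y hy => hy.differentiableAt (by simp)
    have hc : Tendsto (fun s : ℝ => x + s • v) (𝓝 0) (𝓝 x) := by
      simpa using (hline 0).continuousAt.tendsto
    filter_upwards [hc.eventually hev] with s hs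
    exact hs.hasFDerivAt.comp_hasDerivAt s (hline s)
  · have hd : DifferentiableAt ℝ (fderiv ℝ h) x :=
      (hh.fderiv_right (m := 1) (by norm_num [one_add_one_eq_two])).differentiableAt (by simp)
    have hd' : HasFDerivAt (fderiv ℝ h) (fderiv ℝ (fderiv ℝ h) x) (x + (0 : ℝ) • v) := by
      simpa using hd.hasFDerivAt
    have := (hd'.comp_hasDerivAt (0 : ℝ) (hline 0))
    exact ((ContinuousLinearMap.apply ℝ ℝ v).hasFDerivAt.comp_hasDerivAt (0 : ℝ) this)

/-- The Laplacian of a function on `ℝ × ℝ^d` in the standard coordinates. -/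
noncomputable def lap (u : ℝ × EuclideanSpace ℝ (Fin d) → ℝ) (x : ℝ × EuclideanSpace ℝ (Fin d)) :
    ℝ :=
  fderiv ℝ (fderiv ℝ u) x (1, 0) (1, 0) + ∑ i : Fin d,
    fderiv ℝ (fderiv ℝ u) x (0, EuclideanSpace.single i 1) (0, EuclideanSpace.single i 1)

/-- The function `u ∘ R - u - ε t²`, with `R` a reflection and `u` harmonic, has Laplacian
`-2 ε < 0`, hence no local minimum. -/
lemma no_local_min {u : ℝ × EuclideanSpace ℝ (Fin d) → ℝ} {a b ε : ℝ}
    {e : EuclideanSpace ℝ (Fin d)} (he : ‖e‖ = 1) (hε : 0 < ε)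
    {x : ℝ × EuclideanSpace ℝ (Fin d)}
    (hx : ContDiffAt ℝ 2 u x) (hRx : ContDiffAt ℝ 2 u (mirror a b e x))
    (hlx : lap u x = 0) (hlRx : lap u (mirror a b e x) = 0)
    (hmin : IsLocalMin (fun y => u (mirror a b e y) - u y - ε * y.1 ^ 2) x) : False := by
  have key : ∀ v, 0 ≤ fderiv ℝ (fderiv ℝ u) (mirror a b e x) (mirror a 0 e v) (mirror a 0 e v) -
      fderiv ℝ (fderiv ℝ u) x v v - 2 * ε * v.1 ^ 2 := by
    intro v
    obtain ⟨p1, p2⟩ := line_derivs hx v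
    obtain ⟨q1, q2⟩ := line_derivs hRx (mirror a 0 e v)
    have r1 : ∀ s : ℝ, HasDerivAt (fun s : ℝ => ε * (x.1 + s * v.1) ^ 2)
        (2 * ε * v.1 * (x.1 + s * v.1)) s := fun s => by
      have h := ((((hasDerivAt_id s).mul_const v.1).const_add x.1).pow 2).const_mul ε
      refine h.congr_deriv ?_
      simp; ring
    have r2 : HasDerivAt (fun s : ℝ => 2 * ε * v.1 * (x.1 + s * v.1)) (2 * ε * v.1 ^ 2) 0 := by
      have h := (((hasDerivAt_id (0 : ℝ)).mul_const v.1).const_add x.1).const_mul (2 * ε * v.1)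
      refine h.congr_deriv ?_
      ring
    have hloc : IsLocalMin (fun s : ℝ => u (mirror a b e x + s • mirror a 0 e v) - u (x + s • v) -
        ε * (x.1 + s * v.1) ^ 2) 0 := by
      have hc : Tendsto (fun s : ℝ => x + s • v) (𝓝 0) (𝓝 x) := by
        have : Continuous (fun s : ℝ => x + s • v) := by fun_prop
        simpa using this.tendsto 0
      filter_upwards [hc.eventually hmin] with s hs
      simpa [mirror_add_smul] using hs
    refine second_deriv_nonneg hloc ?_ ((q2.sub p2).sub r2)
    filter_upwards [p1, q1] with s hp hq
    exact (hq.sub hp).sub (r1 s)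
  have h0 := key (1, 0)
  have hs := Finset.sum_nonneg fun i (_ : i ∈ Finset.univ) =>
    key (0, EuclideanSpace.single i (1 : ℝ))
  have htr := trace_mirror a e he (fderiv ℝ (fderiv ℝ u) (mirror a b e x))
  simp only [Finset.sum_sub_distrib, ne_eq, OfNat.ofNat_ne_zero, not_false_eq_true, zero_pow,
    mul_zero, sub_zero, one_pow, mul_one] at h0 hs
  unfold lap at hlx hlRx
  linarith

/-- The weak maximum principle for `u ∘ R - u`, where `R` is a reflection which maps the part of
`Ω` above the hyperplane into `Ω`, provided this part is bounded. -/
lemma le_mirror {Ω : Set (ℝ × EuclideanSpace ℝ (Fin d))} (hΩ : IsOpen Ω)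
    {u : ℝ × EuclideanSpace ℝ (Fin d) → ℝ} (hpos : ∀ x ∈ Ω, 0 < u x)
    (hu2 : ContDiffOn ℝ 2 u Ω) (hlap : ∀ x ∈ Ω, lap u x = 0)
    (hcont : ContinuousOn u (closure Ω)) (hzero : ∀ x ∈ frontier Ω, u x = 0)
    {a b : ℝ} {e : EuclideanSpace ℝ (Fin d)} (he : ‖e‖ = 1)
    (hK : IsCompact (closure Ω ∩ {x | 0 ≤ tilt a b e x}))
    (hmir : ∀ x ∈ Ω, 0 < tilt a b e x → mirror a b e x ∈ Ω)
    {x : ℝ × EuclideanSpace ℝ (Fin d)} (hx : x ∈ Ω) (htx : 0 < tilt a b e x) :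
    u x ≤ u (mirror a b e x) := by
  set K := closure Ω ∩ {x | 0 ≤ tilt a b e x} with hKdef
  have hfix : ∀ y, tilt a b e y = 0 → mirror a b e y = y := fun y hy => by
    simp [mirror, hy]
  have hmaps : MapsTo (mirror a b e) K (closure Ω) := by
    rintro y ⟨hy, hty⟩
    rcases (show 0 ≤ tilt a b e y from hty).eq_or_lt with h0 | h0
    · rwa [hfix y h0.symm]
    · have hy' : y ∈ closure (Ω ∩ {z | 0 < tilt a b e z}) := by
        rw [inter_comm]
        exact (isOpen_lt continuous_const (continuous_tilt a b e)).inter_closure ⟨h0, hy⟩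
      exact map_mem_closure (continuous_mirror a b e) hy' fun z hz => hmir z hz.1 hz.2
  have hnonneg : ∀ y ∈ closure Ω, 0 ≤ u y := by
    intro y hy
    by_cases h : y ∈ Ω
    · exact (hpos y h).le
    · exact (hzero y ⟨hy, by rwa [hΩ.interior_eq]⟩).ge
  have hxK : x ∈ K := ⟨subset_closure hx, htx.le⟩
  obtain ⟨A, hA⟩ : ∃ A, ∀ y ∈ K, y.1 ^ 2 ≤ A := by
    obtain ⟨A, hA⟩ := hK.bddAbove_image (f := fun y => y.1 ^ 2) (by fun_prop)
    exact ⟨A, fun y hy => hA ⟨y, hy, rfl⟩⟩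
  have hmain : ∀ ε : ℝ, 0 < ε → -(ε * A) ≤ u (mirror a b e x) - u x - ε * x.1 ^ 2 := by
    intro ε hε
    have hc : ContinuousOn (fun y => u (mirror a b e y) - u y - ε * y.1 ^ 2) K := by
      refine ((hcont.comp (continuous_mirror a b e).continuousOn hmaps).sub
        (hcont.mono inter_subset_left)).sub ?_
      fun_prop
    obtain ⟨z, hzK, hz⟩ := hK.exists_isMinOn ⟨x, hxK⟩ hc
    refine le_trans ?_ (hz hxK)
    have hzA : ε * z.1 ^ 2 ≤ ε * A := mul_le_mul_of_nonneg_left (hA z hzK) hε.le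
    have hzt : 0 ≤ tilt a b e z := hzK.2
    suffices h : u z ≤ u (mirror a b e z) by
      change _ ≤ u (mirror a b e z) - u z - ε * z.1 ^ 2
      linarith
    rcases hzt.eq_or_lt with h0 | h0
    · rw [hfix z h0.symm]
    by_cases hzΩ : z ∈ Ω
    · exfalso
      have hKn : K ∈ 𝓝 z := by
        filter_upwards [hΩ.mem_nhds hzΩ,
          (isOpen_lt continuous_const (continuous_tilt a b e)).mem_nhds h0] with y h1 h2
        exact ⟨subset_closure h1, le_of_lt h2⟩
      have hRz := hmir z hzΩ h0
      exact no_local_min he hε (hu2.contDiffAt (hΩ.mem_nhds hzΩ))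
        (hu2.contDiffAt (hΩ.mem_nhds hRz)) (hlap z hzΩ) (hlap _ hRz) (hz.isLocalMin hKn)
    · rw [hzero z ⟨hzK.1, by rwa [hΩ.interior_eq]⟩]
      exact hnonneg _ (hmaps hzK)
  have hA0 : 0 ≤ A := (sq_nonneg _).trans (hA x hxK)
  refine le_of_forall_pos_le_add fun δ hδ => ?_
  have h1 := hmain (δ / (A + 1)) (by positivity)
  have h2 : δ / (A + 1) * A ≤ δ := by
    rw [div_mul_eq_mul_div, div_le_iff₀ (by positivity)]; nlinarith
  have h3 : 0 ≤ δ / (A + 1) * x.1 ^ 2 := by positivity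
  linarith

/-- `f' → 0` forces `f` to grow slower than any positive slope. -/
lemma sublinear {f f' : ℝ → ℝ} {K : NNReal} (hflip : LipschitzOnWith K f (Ioi 0))
    (hfderiv : ∀ t : ℝ, 0 < t → HasDerivAt f (f' t) t) (hf'lim : Tendsto f' atTop (𝓝 0))
    {η : ℝ} (hη : 0 < η) : ∃ C, ∀ s, 0 < s → f s ≤ C + η * s := by
  obtain ⟨T, hT⟩ := eventually_atTop.1 ((hf'lim.eventually_lt_const hη).and (eventually_gt_atTop 0))
  have hT0 : 0 < T := (hT T le_rfl).2
  refine ⟨f T + K * T, fun s hs => ?_⟩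
  rcases le_total s T with h | h
  · have h1 := hflip.dist_le_mul s hs T hT0
    rw [Real.dist_eq, Real.dist_eq, abs_sub_comm s T, abs_of_nonneg (sub_nonneg.2 h)] at h1
    have h2 := (le_abs_self _).trans h1
    have : 0 ≤ (K : ℝ) * s := by positivity
    have : 0 ≤ η * s := by positivity
    linarith
  · have hanti : AntitoneOn (fun r => f r - η * r) (Ici T) := by
      refine antitoneOn_of_hasDerivWithinAt_nonpos (f' := fun r => f' r - η) (convex_Ici T) ?_ ?_ ?_
      · intro r hr
        have := (hfderiv r (hT0.trans_le hr)).continuousAt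
        exact (this.sub (by fun_prop)).continuousWithinAt
      · intro r hr
        rw [interior_Ici] at hr
        have h1 := (hfderiv r (hT0.trans hr)).sub ((hasDerivAt_id r).const_mul η)
        exact (h1.congr_deriv (by simp)).hasDerivWithinAt
      · intro r hr
        rw [interior_Ici] at hr
        linarith [(hT r (le_of_lt hr)).1]
    have h1 := hanti (self_mem_Ici) h h
    have : 0 ≤ (K : ℝ) * T := by positivity
    have : 0 ≤ η * T := by positivity
    simp only at h1
    linarith

/-- The function `f² + t² + 2 M t` is nondecreasing for some `M`, since its derivative is
`2 (f f' + t + M)` and `|f f'|` is at most a constant plus `t`. -/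
lemma exists_monotone {f f' : ℝ → ℝ} {K : NNReal} (hfpos : ∀ t : ℝ, 0 < t → 0 < f t)
    (hflip : LipschitzOnWith K f (Ioi 0))
    (hfderiv : ∀ t : ℝ, 0 < t → HasDerivAt f (f' t) t) (hf'lim : Tendsto f' atTop (𝓝 0)) :
    ∃ M, 0 ≤ M ∧ MonotoneOn (fun s => f s ^ 2 + s ^ 2 + 2 * M * s) (Ioi 0) := by
  obtain ⟨C, hC⟩ := sublinear hflip hfderiv hf'lim (η := 1 / (K + 1)) (by positivity)
  refine ⟨K * |C|, by positivity, ?_⟩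
  have hD : ∀ s, 0 < s → HasDerivAt (fun s => f s ^ 2 + s ^ 2 + 2 * (K * |C|) * s)
      (2 * (f s * f' s + s + K * |C|)) s := by
    intro s hs
    have h := (((hfderiv s hs).pow 2).add ((hasDerivAt_id s).pow 2)).add
      ((hasDerivAt_id s).const_mul (2 * (K * |C|)))
    refine h.congr_deriv ?_
    simp; ring
  refine monotoneOn_of_hasDerivWithinAt_nonneg
    (f' := fun s => 2 * (f s * f' s + s + K * |C|)) (convex_Ioi 0) ?_ ?_ ?_
  · exact fun s hs => (hD s hs).continuousAt.continuousWithinAt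
  · intro s hs
    rw [interior_Ioi] at hs
    exact (hD s hs).hasDerivWithinAt
  · intro s hs
    rw [interior_Ioi] at hs
    have hs0 : 0 < s := hs
    have h1 : |f' s| ≤ K := (hfderiv s hs0).le_of_lipschitzOn (Ioi_mem_nhds hs0) hflip
    have h2 : f s * -f' s ≤ f s * K :=
      mul_le_mul_of_nonneg_left ((neg_le_abs _).trans h1) (hfpos s hs0).le
    have h3 : f s * K ≤ (|C| + 1 / (K + 1) * s) * K :=
      mul_le_mul_of_nonneg_right ((hC s hs0).trans (by linarith [le_abs_self C])) K.coe_nonneg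
    have h4 : 1 / ((K : ℝ) + 1) * s * K ≤ s := by
      have : (0 : ℝ) ≤ K := K.coe_nonneg
      rw [div_mul_eq_mul_div, div_mul_eq_mul_div, div_le_iff₀ (by positivity)]
      nlinarith
    nlinarith

/-- A hyperplane of small positive slope `a` sends the part of the domain above it into the domain:
with `m` the displacement in the direction `-e`, the reflection moves `(s, y)` to `(s', y')`,
`s' = s + a m`, and `|y'|² + s'² = |y|² + s² - 2 m b`. -/
lemma mirror_mem {f : ℝ → ℝ} (hfpos : ∀ t : ℝ, 0 < t → 0 < f t) {M : ℝ}
    (hmono : MonotoneOn (fun s => f s ^ 2 + s ^ 2 + 2 * M * s) (Ioi 0))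
    {a b : ℝ} {e : EuclideanSpace ℝ (Fin d)} (he : ‖e‖ = 1) (ha : 0 < a) (hab : a * M ≤ b)
    {x : ℝ × EuclideanSpace ℝ (Fin d)} (hx : 0 < x.1 ∧ ‖x.2‖ < f x.1)
    (htx : 0 < tilt a b e x) :
    0 < (mirror a b e x).1 ∧ ‖(mirror a b e x).2‖ < f (mirror a b e x).1 := by
  obtain ⟨hx1, hx2⟩ := hx
  set m := 2 / (1 + a ^ 2) * tilt a b e x with hm
  have hm0 : 0 < m := by positivity
  have hin : inner ℝ e x.2 = m * (1 + a ^ 2) / 2 + b + a * x.1 := by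
    rw [hm]; field_simp; unfold tilt; ring
  have hs1 : (mirror a b e x).1 = x.1 + m * a := rfl
  have hs2 : (mirror a b e x).2 = x.2 - m • e := rfl
  have hs' : 0 < x.1 + m * a := by positivity
  rw [hs1, hs2]
  refine ⟨hs', ?_⟩
  have hn : ‖x.2 - m • e‖ ^ 2 = ‖x.2‖ ^ 2 + x.1 ^ 2 - (x.1 + m * a) ^ 2 - 2 * m * b := by
    rw [norm_sub_sq_real, norm_smul, he, inner_smul_right, real_inner_comm, hin]
    simp; ring
  have h1 := hmono (show x.1 ∈ Ioi 0 from hx1) (show x.1 + m * a ∈ Ioi 0 from hs')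
    (by nlinarith)
  simp only at h1
  have h2 : ‖x.2‖ ^ 2 < f x.1 ^ 2 := by gcongr
  have h3 : m * (a * M) ≤ m * b := mul_le_mul_of_nonneg_left hab hm0.le
  refine lt_of_pow_lt_pow_left₀ 2 (hfpos _ hs').le ?_
  rw [hn]
  nlinarith

/-- Since the slope `a` of the hyperplane is positive and `f` is sublinear, only a bounded part of
the domain lies above the hyperplane. -/
lemma isCompact_cap {f : ℝ → ℝ} {Ω : Set (ℝ × EuclideanSpace ℝ (Fin d))}
    (hΩ : Ω = {p : ℝ × EuclideanSpace ℝ (Fin d) | 0 < p.1 ∧ ‖p.2‖ < f p.1})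
    {a b C : ℝ} {e : EuclideanSpace ℝ (Fin d)} (he : ‖e‖ = 1) (ha : 0 < a)
    (hC : ∀ s, 0 < s → f s ≤ C + a / 2 * s) :
    IsCompact (closure Ω ∩ {x | 0 ≤ tilt a b e x}) := by
  have hsub : closure Ω ⊆ {x | 0 ≤ x.1 ∧ ‖x.2‖ ≤ C + a / 2 * x.1} := by
    refine closure_minimal ?_ ?_
    · rw [hΩ]
      exact fun x hx => ⟨hx.1.le, hx.2.le.trans (hC _ hx.1)⟩
    · exact (isClosed_le continuous_const continuous_fst).inter
        (isClosed_le continuous_snd.norm (continuous_const.add (continuous_const.mul continuous_fst)))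
  set T := 2 * (C - b) / a with hT
  have hcomp : IsCompact (Icc (0 : ℝ) T ×ˢ
      Metric.closedBall (0 : EuclideanSpace ℝ (Fin d)) (C + a / 2 * T)) :=
    isCompact_Icc.prod (isCompact_closedBall _ _)
  refine hcomp.of_isClosed_subset
    (isClosed_closure.inter (isClosed_le continuous_const (continuous_tilt a b e))) ?_
  rintro x ⟨hx, htx⟩
  obtain ⟨h1, h2⟩ := hsub hx
  have hin : inner ℝ e x.2 ≤ ‖x.2‖ := by simpa [he] using real_inner_le_norm e x.2
  have htx' : 0 ≤ inner ℝ e x.2 - b - a * x.1 := htx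
  have hxT : x.1 ≤ T := by
    rw [hT, le_div_iff₀ ha]; linarith
  refine ⟨⟨h1, hxT⟩, ?_⟩
  rw [mem_closedBall_zero_iff]
  refine h2.trans ?_
  gcongr

end


/-- For a Martin function on the rotationally symmetric domain
`Ω = {(t,Y) : t > 0, |Y| < f(t)}` with `f` Lipschitz and `f'(t) → 0`, the
maximum on each slice `θ_t`, for `t` large enough, is attained at `(t,0)`. -/
theorem stmt_7 (d : ℕ) (hd : 1 ≤ d) (f f' : ℝ → ℝ)
    (hfpos : ∀ t : ℝ, 0 < t → 0 < f t)
    (hflip : ∃ K : NNReal, LipschitzOnWith K f (Set.Ioi 0))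
    (hfderiv : ∀ t : ℝ, 0 < t → HasDerivAt f (f' t) t)
    (hf'lim : Filter.Tendsto f' Filter.atTop (nhds 0))
    (Ω : Set (ℝ × EuclideanSpace ℝ (Fin d)))
    (hΩ : Ω = {p : ℝ × EuclideanSpace ℝ (Fin d) | 0 < p.1 ∧ ‖p.2‖ < f p.1})
    (u : ℝ × EuclideanSpace ℝ (Fin d) → ℝ)
    (hpos : ∀ x ∈ Ω, 0 < u x)
    (hu2 : ContDiffOn ℝ 2 u Ω)
    (hharm : ∀ x ∈ Ω,
      iteratedFDerivWithin ℝ 2 u Ω x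
        ![((1 : ℝ), (0 : EuclideanSpace ℝ (Fin d))), ((1 : ℝ), 0)]
      + ∑ i : Fin d, iteratedFDerivWithin ℝ 2 u Ω x
        ![((0 : ℝ), EuclideanSpace.single i 1), ((0 : ℝ), EuclideanSpace.single i 1)] = 0)
    (hcont : ContinuousOn u (closure Ω))
    (hzero : ∀ x ∈ frontier Ω, u x = 0) :
    ∃ t₀ : ℝ, 0 < t₀ ∧ ∀ t : ℝ, t₀ < t → ∀ Y : EuclideanSpace ℝ (Fin d),
      ‖Y‖ < f t → u (t, Y) ≤ u (t, 0) := by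
  obtain ⟨K, hflip⟩ := hflip
  have hfcont : ContinuousOn f (Ioi 0) := hflip.continuousOn
  have hΩo : IsOpen Ω := by
    have h1 : IsOpen {p : ℝ × EuclideanSpace ℝ (Fin d) | 0 < p.1} :=
      isOpen_lt continuous_const continuous_fst
    have h2 : ContinuousOn (fun p : ℝ × EuclideanSpace ℝ (Fin d) => f p.1 - ‖p.2‖)
        {p | 0 < p.1} :=
      (hfcont.comp continuous_fst.continuousOn fun p hp => hp).sub (by fun_prop)
    have h3 := h2.isOpen_inter_preimage h1 (isOpen_Ioi (a := (0 : ℝ)))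
    rw [hΩ]
    convert h3 using 1
    ext p
    simp
  have hlap : ∀ x ∈ Ω, lap u x = 0 := by
    intro x hx
    have h := hharm x hx
    simp only [iteratedFDerivWithin_of_isOpen 2 hΩo hx, iteratedFDeriv_two_apply] at h
    simpa [lap] using h
  obtain ⟨M, hM0, hmono⟩ := exists_monotone hfpos hflip hfderiv hf'lim
  refine ⟨1, one_pos, fun t ht Y hY => ?_⟩
  have ht0 : 0 < t := one_pos.trans ht
  rcases eq_or_ne Y 0 with rfl | hY0
  · exact le_rfl
  have hYn : 0 < ‖Y‖ := norm_pos_iff.2 hY0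
  set e : EuclideanSpace ℝ (Fin d) := ‖Y‖⁻¹ • Y with he_def
  have he : ‖e‖ = 1 := by
    rw [he_def, norm_smul, norm_inv, norm_norm, inv_mul_cancel₀ hYn.ne']
  have heY : ‖Y‖ • e = Y := by rw [he_def, smul_inv_smul₀ hYn.ne']
  have hin : inner ℝ e Y = ‖Y‖ := by
    rw [he_def, real_inner_smul_left, real_inner_self_eq_norm_sq]; field_simp
  -- the hyperplane of slope `a` through the midpoint `(t, Y / 2)`
  have htilt : ∀ a, tilt a (‖Y‖ / 2 - a * t) e (t, Y) = ‖Y‖ / 2 := fun a => by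
    simp only [tilt, hin]; ring
  have hmem : (t, Y) ∈ Ω := by rw [hΩ]; exact ⟨ht0, hY⟩
  have hmem0 : (t, (0 : EuclideanSpace ℝ (Fin d))) ∈ Ω := by
    rw [hΩ]; exact ⟨ht0, by simpa using hfpos t ht0⟩
  have hle : ∀ᶠ a : ℝ in 𝓝[>] 0, u (t, Y) ≤ u (mirror a (‖Y‖ / 2 - a * t) e (t, Y)) := by
    have hsmall : ∀ᶠ a : ℝ in 𝓝[>] 0, a * (M + t) < ‖Y‖ / 2 := by
      have hc : Tendsto (fun a : ℝ => a * (M + t)) (𝓝 0) (𝓝 0) := by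
        have : Continuous fun a : ℝ => a * (M + t) := by fun_prop
        simpa using this.tendsto 0
      exact (hc.mono_left nhdsWithin_le_nhds).eventually_lt_const (by positivity)
    filter_upwards [hsmall, self_mem_nhdsWithin] with a ha ha0
    have ha0 : 0 < a := ha0
    obtain ⟨C, hC⟩ := sublinear hflip hfderiv hf'lim (half_pos ha0)
    refine le_mirror hΩo hpos hu2 hlap hcont hzero he (isCompact_cap hΩ he ha0 hC) ?_ hmem
      (by rw [htilt]; positivity)
    intro x hx htx
    rw [hΩ] at hx ⊢
    exact mirror_mem hfpos hmono he ha0 (by linarith) hx htx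
  have hlim : Tendsto (fun a : ℝ => mirror a (‖Y‖ / 2 - a * t) e (t, Y)) (𝓝[>] 0)
      (𝓝 (t, 0)) := by
    have hc : Continuous fun a : ℝ => mirror a (‖Y‖ / 2 - a * t) e (t, Y) := by
      simp only [mirror, htilt]
      have : ∀ a : ℝ, 1 + a ^ 2 ≠ 0 := fun a => by positivity
      fun_prop (disch := assumption)
    have h0 : mirror 0 (‖Y‖ / 2 - 0 * t) e (t, Y) = (t, 0) := by
      simp only [mirror, htilt]
      ext1
      · simp
      · simp only [ne_eq, OfNat.ofNat_ne_zero, not_false_eq_true, zero_pow, add_zero, div_one]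
        rw [mul_div_cancel₀ _ two_ne_zero, heY, sub_self]
    rw [← h0]
    exact (hc.tendsto 0).mono_left nhdsWithin_le_nhds
  have hcu : ContinuousAt u (t, 0) := hu2.continuousOn.continuousAt (hΩo.mem_nhds hmem0)
  exact ge_of_tendsto (hcu.tendsto.comp hlim) hle
end

section
/- Let Ω ⊂ {z ∈ ℂ : Re z > 0} be an open convex domain that contains the positive real axis {x + 0i : x > 0} and is symmetric with respect to it (z ∈ Ω iff conj(z) ∈ Ω). If there exists x₀ > 0 such that ∂Ω ∩ {x₀ + iy : y > 0} = ∅, where ∂Ω denotes the frontier of Ω, then Ω is the right half plane {z ∈ ℂ : Re z > 0}. -/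
/-!
The open upper vertical ray over `x₀` is connected, starts inside `Ω` (near `x₀`, since `Ω` is open)
and misses the frontier, so it lies in `Ω` (`ray_subset`). Any `a + bi` with `a, b > 0` is a convex
combination of a point of this ray and a positive real, namely
`a + bi = x₀/(a+x₀) • (a²/x₀) + a/(a+x₀) • (x₀ + (b(a+x₀)/a) i)`,
so it lies in `Ω` by convexity; the lower quadrant follows by conjugation.
-/

theorem ray_subset (Ω : Set ℂ) (hΩo : IsOpen Ω) (x₀ : ℝ) (hx : (x₀ : ℂ) ∈ Ω)
    (hempty : frontier Ω ∩ {z : ℂ | z.re = x₀ ∧ 0 < z.im} = ∅) :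
    {z : ℂ | z.re = x₀ ∧ 0 < z.im} ⊆ Ω := by
  have hconv : Convex ℝ {z : ℂ | z.re = x₀ ∧ 0 < z.im} :=
    (convex_hyperplane Complex.reLm.isLinear x₀).inter (convex_halfSpace_im_gt 0)
  have hmeet : ({z : ℂ | z.re = x₀ ∧ 0 < z.im} ∩ Ω).Nonempty := by
    obtain ⟨ε, hε, hball⟩ := Metric.isOpen_iff.1 hΩo _ hx
    refine ⟨x₀ + (ε / 2 : ℝ) * Complex.I, by simp [hε], hball ?_⟩
    rw [Metric.mem_ball, dist_eq_norm, add_sub_cancel_left, norm_mul, Complex.norm_I,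
      Complex.norm_real, Real.norm_eq_abs, abs_of_pos (half_pos hε)]
    linarith
  -- Off the frontier, the ray is covered by the disjoint open sets `Ω` and `(closure Ω)ᶜ`.
  refine hconv.isPreconnected.subset_left_of_subset_union hΩo isClosed_closure.isOpen_compl
    (Set.disjoint_compl_right_iff_subset.2 subset_closure) (fun w hw => ?_) hmeet
  by_contra hnot
  rw [Set.mem_union, not_or, Set.notMem_compl_iff] at hnot
  have hwf : w ∈ frontier Ω := by
    rw [hΩo.frontier_eq]
    exact ⟨hnot.2, hnot.1⟩
  exact Set.notMem_empty w (hempty ▸ ⟨hwf, hw⟩)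

/-- For a convex domain in the right half plane, containing the
positive real axis and symmetric with respect to it, if some open upper
vertical line misses the frontier entirely, then the domain is the whole right
half plane. -/
theorem stmt_9 (Ω : Set ℂ) (hΩo : IsOpen Ω) (hΩconv : Convex ℝ Ω)
    (hsub : Ω ⊆ {z : ℂ | 0 < z.re})
    (haxis : ∀ x : ℝ, 0 < x → (x : ℂ) ∈ Ω)
    (hsym : ∀ z : ℂ, z ∈ Ω ↔ (starRingEnd ℂ) z ∈ Ω)
    (x₀ : ℝ) (hx₀ : 0 < x₀)
    (hempty : frontier Ω ∩ {z : ℂ | z.re = x₀ ∧ 0 < z.im} = ∅) :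
    Ω = {z : ℂ | 0 < z.re} := by
  have hray := ray_subset Ω hΩo x₀ (haxis x₀ hx₀) hempty
  have hupper : ∀ z : ℂ, 0 < z.re → 0 < z.im → z ∈ Ω := by
    intro z ha hb
    have hs : 0 < z.re + x₀ := by positivity
    have hp : ((z.re ^ 2 / x₀ : ℝ) : ℂ) ∈ Ω := haxis _ (by positivity)
    have hq : (⟨x₀, z.im * (z.re + x₀) / z.re⟩ : ℂ) ∈ Ω :=
      hray ⟨rfl, by dsimp only; positivity⟩
    have hcomb := hΩconv hp hq (a := x₀ / (z.re + x₀)) (b := z.re / (z.re + x₀))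
      (by positivity) (by positivity) (by field_simp; ring)
    convert hcomb using 1
    apply Complex.ext
    · rw [Complex.add_re, Complex.smul_re, Complex.smul_re, Complex.ofReal_re]
      simp only [smul_eq_mul]
      field_simp
    · rw [Complex.add_im, Complex.smul_im, Complex.smul_im, Complex.ofReal_im]
      simp only [smul_eq_mul]
      field_simp
      ring
  refine hsub.antisymm fun z hz => ?_
  rcases lt_trichotomy z.im 0 with h | h | h
  · exact (hsym z).2 (hupper _ (by simpa using hz) (by simpa using h))
  · have hreal : z = (z.re : ℂ) := Complex.ext rfl h
    rw [hreal]
    exact haxis _ hz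
  · exact hupper z hz h
end

section
/- Let Ω = {(x,y) ∈ ℝ² : x > 0 and x² + y² > 1} and define u(x,y) = x − x/(x² + y²). Then u is a Martin function on Ω: u is harmonic on Ω, u > 0 on Ω, u extends continuously to the closure of Ω, and u vanishes on the frontier ∂Ω. -/
/-!
Identifying `ℝ × ℝ` with `ℂ`, the function `u` is the real part of `z - z⁻¹`, which is analytic off
the origin; `AnalyticAt.harmonicAt_re` therefore gives smoothness and the vanishing of the
Laplacian, which is transported to `ℝ × ℝ` along `Complex.equivRealProdCLM`. Positivity, continuity
and the boundary values follow from `u = x * (1 - 1 / (x² + y²))`, since `x ≥ 0` and `x² + y² ≥ 1`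
on the closure of `Ω`, with equality in one of the two on the frontier.
-/

lemma harmonicAt_re_sub_inv {z : ℂ} (hz : z ≠ 0) :
    InnerProductSpace.HarmonicAt (fun w : ℂ => (w - w⁻¹).re) z :=
  (analyticAt_id.sub (analyticAt_inv hz)).harmonicAt_re

/-- `u(x,y) = x - x/(x² + y²)` is a Martin function on the
non-convex domain `Ω = {(x,y) : x > 0, x² + y² > 1}`: harmonic, positive,
continuous up to the closure, and vanishing on the frontier. -/
theorem stmt_12 (Ω : Set (ℝ × ℝ))
    (hΩ : Ω = {p : ℝ × ℝ | 0 < p.1 ∧ 1 < p.1 ^ 2 + p.2 ^ 2})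
    (u : ℝ × ℝ → ℝ)
    (hu : ∀ p : ℝ × ℝ, u p = p.1 - p.1 / (p.1 ^ 2 + p.2 ^ 2)) :
    ContDiffOn ℝ 2 u Ω ∧
    (∀ p ∈ Ω,
      iteratedFDerivWithin ℝ 2 u Ω p ![((1 : ℝ), (0 : ℝ)), ((1 : ℝ), (0 : ℝ))]
      + iteratedFDerivWithin ℝ 2 u Ω p ![((0 : ℝ), (1 : ℝ)), ((0 : ℝ), (1 : ℝ))] = 0) ∧
    (∀ p ∈ Ω, 0 < u p) ∧
    ContinuousOn u (closure Ω) ∧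
    (∀ p ∈ frontier Ω, u p = 0) := by
  have hopen : IsOpen Ω := by
    rw [hΩ]
    exact IsOpen.and (isOpen_lt (by fun_prop) (by fun_prop))
      (isOpen_lt (by fun_prop) (by fun_prop))
  have hcl : closure Ω ⊆ {p : ℝ × ℝ | 0 ≤ p.1 ∧ 1 ≤ p.1 ^ 2 + p.2 ^ 2} := by
    refine closure_minimal ?_ (IsClosed.and (isClosed_le (by fun_prop) (by fun_prop))
      (isClosed_le (by fun_prop) (by fun_prop)))
    rw [hΩ]
    exact fun p hp => ⟨hp.1.le, hp.2.le⟩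
  have hcomp : u = (fun w : ℂ => (w - w⁻¹).re) ∘ Complex.equivRealProdCLM.symm := by
    funext p
    simp [hu, Complex.inv_re, Complex.normSq_apply, pow_two]
  have hharm : ∀ p ∈ Ω, InnerProductSpace.HarmonicAt (fun w : ℂ => (w - w⁻¹).re)
      (Complex.equivRealProdCLM.symm p) := by
    intro p hp
    rw [hΩ] at hp
    refine harmonicAt_re_sub_inv fun h => hp.1.ne' ?_
    simpa using congrArg Complex.re h
  refine ⟨fun p hp => ?_, fun p hp => ?_, fun p hp => ?_, ?_, fun p hp => ?_⟩
  · rw [hcomp]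
    exact ((hharm p hp).1.comp p
      Complex.equivRealProdCLM.symm.contDiff.contDiffAt).contDiffWithinAt
  · have hΔ := (hharm p hp).2.self_of_nhds
    rw [InnerProductSpace.laplacian_eq_iteratedFDeriv_complexPlane] at hΔ
    simp only [Pi.zero_apply] at hΔ
    have key := Complex.equivRealProdCLM.symm.iteratedFDerivWithin_comp_right
      (fun w : ℂ => (w - w⁻¹).re) uniqueDiffOn_univ (Set.mem_univ _) (x := p) 2
    rw [Set.preimage_univ, iteratedFDerivWithin_univ, iteratedFDerivWithin_univ, ← hcomp] at key
    have e1 : Complex.equivRealProdCLM.symm ((1 : ℝ), (0 : ℝ)) = 1 := by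
      apply Complex.ext <;> simp
    have eI : Complex.equivRealProdCLM.symm ((0 : ℝ), (1 : ℝ)) = Complex.I := by
      apply Complex.ext <;> simp
    rw [iteratedFDerivWithin_of_isOpen 2 hopen hp, key]
    simp only [ContinuousMultilinearMap.compContinuousLinearMap_apply]
    convert hΔ using 3 <;>
    · funext i
      fin_cases i <;> simp [e1, eI]
  · rw [hΩ] at hp
    rw [hu, sub_pos]
    exact div_lt_self hp.1 hp.2
  · rw [funext hu]
    refine ContinuousOn.sub (by fun_prop) (ContinuousOn.div (by fun_prop) (by fun_prop) ?_)
    exact fun p hp => (zero_lt_one.trans_le (hcl hp).2).ne'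
  · rw [hopen.frontier_eq] at hp
    obtain ⟨h0, h1⟩ := hcl hp.1
    have hn := hp.2
    rw [hΩ] at hn
    rw [hu]
    rcases h0.eq_or_lt with h | h
    · simp [← h]
    · have h2 : p.1 ^ 2 + p.2 ^ 2 = 1 := le_antisymm (not_lt.1 fun h' => hn ⟨h, h'⟩) h1
      simp [h2]
end

section
/- Let Ω = {(x,y) ∈ ℝ² : x > 0 and x² + y² > 1} and u(x,y) = x − x/(x² + y²). Then for every c > 0, the superlevel set Γ_c = {(x,y) ∈ Ω : u(x,y) > c} is nonempty and not convex. -/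
/-! Let `x₀ > 1` be the positive root of `x² = c x + 1`, so that `u (x₀, 0) = x₀ - 1 / x₀ = c`.
Since `u (x₀, y)` strictly increases with `y²`, both `(x₀, 1)` and `(x₀, -1)` lie in the superlevel
set, while their midpoint `(x₀, 0)` lies on the level `c` and so does not. -/

/-- For the Martin function `u(x,y) = x - x/(x² + y²)` on the
non-convex domain `Ω = {(x,y) : x > 0, x² + y² > 1}`, every superlevel set
`Γ_c`, `c > 0`, is nonempty and non-convex. -/
theorem stmt_14 (Ω : Set (ℝ × ℝ))
    (hΩ : Ω = {p : ℝ × ℝ | 0 < p.1 ∧ 1 < p.1 ^ 2 + p.2 ^ 2})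
    (u : ℝ × ℝ → ℝ)
    (hu : ∀ p : ℝ × ℝ, u p = p.1 - p.1 / (p.1 ^ 2 + p.2 ^ 2))
    (c : ℝ) (hc : 0 < c) :
    ({p ∈ Ω | c < u p}).Nonempty ∧ ¬ Convex ℝ {p ∈ Ω | c < u p} := by
  obtain ⟨x, hx, hxc⟩ : ∃ x : ℝ, 0 < x ∧ x ^ 2 = c * x + 1 := by
    refine ⟨(c + √(c ^ 2 + 4)) / 2, by positivity, ?_⟩
    have h : √(c ^ 2 + 4) ^ 2 = c ^ 2 + 4 := Real.sq_sqrt (by positivity)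
    linear_combination h / 4
  have hmem : ∀ y : ℝ, y ^ 2 = 1 → (x, y) ∈ {p ∈ Ω | c < u p} := by
    intro y hy
    subst hΩ
    refine ⟨⟨hx, ?_⟩, ?_⟩
    · change 1 < x ^ 2 + y ^ 2
      rw [hy]
      nlinarith
    · rw [hu]
      change c < x - x / (x ^ 2 + y ^ 2)
      rw [hy, lt_sub_comm, div_lt_iff₀ (by positivity)]
      -- The root equation gives `(x - c) * x = 1`, so the right-hand side is `x + (x - c)`.
      have h1 : (x - c) * x = 1 := by linear_combination hxc
      have h2 : 0 < x - c := pos_of_mul_pos_left (by rw [h1]; exact one_pos) hx.le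
      linear_combination h2 - x * h1
  refine ⟨⟨(x, 1), hmem 1 (by norm_num)⟩, fun hconv => ?_⟩
  have hmid := (hconv.midpoint_mem (hmem 1 (by norm_num)) (hmem (-1) (by norm_num))).2
  have heq : midpoint ℝ ((x, 1) : ℝ × ℝ) (x, -1) = (x, 0) := by
    rw [midpoint_eq_smul_add]
    ext <;> simp
    ring
  rw [heq, hu] at hmid
  have hval : x - x / (x ^ 2 + 0 ^ 2) = c := by
    field_simp
    linear_combination x * hxc
  exact absurd hval hmid.ne'
end

section
/- Let S = {z ∈ ℂ : Re z > 0 and |Im z| < Re z} and Ω = S \ {x + 0i : 0 ≤ x ≤ 1}. Let g be a holomorphic function on Ω satisfying g(z)² = z⁴ − 1 and Re g(z) > 0 for all z ∈ Ω, and set u = Re g. Then there exists c₀ > 0 such that for every c > c₀ the superlevel set Γ_c = {z ∈ Ω : u(z) > c} is convex. -/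
/-!
Put `p = Re z² = ab` and `q = Im z² = (b² - a²)/2`, where `a = x - y` and `b = x + y` are positive
exactly on `S`. Comparing real and imaginary parts in `g² = z⁴ - 1` gives
`p² (u² + q²) = u² (u² + q² + 1)`, and since `C ↦ C (C + q² + 1) / (C + q²)` is increasing, `u > c`
is equivalent to `p² (c² + q²) > c² (c² + q² + 1)` (`lt_iff_super`). This inequality says that
`F = log a + log b + ½ log T - ½ log (T + 1) - log c` is positive, with `T = c² + q²`.

`F` is a small perturbation of the concave function `log a + log b`. Where `F ≤ 0` one has
`p ≤ 2c`, hence `a², b² ≤ 2(c + |q|)`, and this makes the second derivative of `F` along every line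
negative once `c > 5` (`hess_neg`). So `F` has no nonpositive interior minimum on a segment, and
positivity at both endpoints propagates to the whole segment (`segment_super`).
-/

/-- At a point with `ab ≤ 2c`, an upper bound for the second derivative of
`log a + log b + ½ log T - ½ log (T + 1)` in the direction `(α, β)` is negative. The bound omits
only the nonpositive term that comes from differentiating `1 / (T (T + 1))`. -/
lemma hess_neg {c a b α β : ℝ} (hc : 5 < c) (ha : 0 < a) (hb : 0 < b)
    (hp : a * b ≤ 2 * c) (hne : α ≠ 0 ∨ β ≠ 0) :
    -(α ^ 2 / a ^ 2) - β ^ 2 / b ^ 2 +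
      ((b * β - a * α) ^ 2 + (b ^ 2 - a ^ 2) / 2 * (β ^ 2 - α ^ 2)) /
        ((c ^ 2 + ((b ^ 2 - a ^ 2) / 2) ^ 2) * (c ^ 2 + ((b ^ 2 - a ^ 2) / 2) ^ 2 + 1)) < 0 := by
  set q := (b ^ 2 - a ^ 2) / 2 with hq
  set T := c ^ 2 + q ^ 2 with hT
  have hT25 : 25 < T := by nlinarith [sq_nonneg q]
  -- `a²` and `b²` are `√(p² + q²) ∓ q`, both at most `p + 2|q|`.
  have hs : a ^ 2 ≤ a * b + 2 * |q| ∧ b ^ 2 ≤ a * b + 2 * |q| := by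
    have h1 := le_abs_self q
    have h2 := neg_abs_le q
    constructor
    · rcases le_total a b with h | h
      · nlinarith [abs_nonneg q]
      · nlinarith
    · rcases le_total a b with h | h
      · nlinarith
      · nlinarith [abs_nonneg q]
  have hM : (2 * c + 2 * |q|) ^ 2 ≤ 8 * T := by
    have : |q| ^ 2 = q ^ 2 := sq_abs q
    nlinarith [sq_nonneg (c - |q|)]
  have hA0 : 0 < a ^ 2 := by positivity
  have hB0 : 0 < b ^ 2 := by positivity
  obtain ⟨M, hMd⟩ : ∃ M, M = 2 * c + 2 * |q| := ⟨_, rfl⟩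
  have haM : a ^ 2 ≤ M := by linarith [hs.1]
  have hbM : b ^ 2 ≤ M := by linarith [hs.2]
  rw [← hMd] at hM
  have hqM : |q| ≤ M := by rw [hMd]; linarith [abs_nonneg q]
  have hTT : 0 < T * (T + 1) := by positivity
  have hM3 : 3 * M ^ 2 < T * (T + 1) := by nlinarith
  have hM0 : 0 < M := by linarith
  -- The numerator is at most `3 M (α² + β²)`, and `α² ≤ M α² / a²`.
  have hnum : (b * β - a * α) ^ 2 + q * (β ^ 2 - α ^ 2) ≤ 3 * M * (α ^ 2 + β ^ 2) := by
    have h1 : q * (β ^ 2 - α ^ 2) ≤ M * (α ^ 2 + β ^ 2) := by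
      have := (abs_le.1 hqM)
      nlinarith [mul_nonneg (sub_nonneg.2 this.2) (sq_nonneg β),
        mul_nonneg (by linarith [this.1] : (0:ℝ) ≤ M + q) (sq_nonneg α)]
    nlinarith [sq_nonneg (b * β + a * α), mul_nonneg (sub_nonneg.2 haM) (sq_nonneg α),
      mul_nonneg (sub_nonneg.2 hbM) (sq_nonneg β)]
  have hX : α ^ 2 ≤ M * (α ^ 2 / a ^ 2) := by
    rw [mul_div_assoc', le_div_iff₀ hA0]
    nlinarith [mul_nonneg (sub_nonneg.2 haM) (sq_nonneg α)]
  have hY : β ^ 2 ≤ M * (β ^ 2 / b ^ 2) := by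
    rw [mul_div_assoc', le_div_iff₀ hB0]
    nlinarith [mul_nonneg (sub_nonneg.2 hbM) (sq_nonneg β)]
  have hpos : 0 < α ^ 2 / a ^ 2 + β ^ 2 / b ^ 2 := by
    rcases hne with h | h
    · have : 0 < α ^ 2 / a ^ 2 := by positivity
      have : 0 ≤ β ^ 2 / b ^ 2 := by positivity
      linarith
    · have : 0 ≤ α ^ 2 / a ^ 2 := by positivity
      have : 0 < β ^ 2 / b ^ 2 := by positivity
      linarith
  have : ((b * β - a * α) ^ 2 + q * (β ^ 2 - α ^ 2)) / (T * (T + 1)) <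
      α ^ 2 / a ^ 2 + β ^ 2 / b ^ 2 := by
    rw [div_lt_iff₀ hTT]
    generalize α ^ 2 / a ^ 2 = X at *
    generalize β ^ 2 / b ^ 2 = Y at *
    calc _ ≤ 3 * M * (α ^ 2 + β ^ 2) := hnum
      _ ≤ 3 * M * (M * X + M * Y) := by gcongr
      _ = 3 * M ^ 2 * (X + Y) := by ring
      _ < T * (T + 1) * (X + Y) := by gcongr
      _ = _ := by ring
  linarith

/-- An interior minimum excludes a negative second derivative. -/
lemma not_localMin_of_second_deriv_neg {F F' : ℝ → ℝ} {t d : ℝ}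
    (hF : ∀ᶠ s in nhds t, HasDerivAt F (F' s) s) (hF' : HasDerivAt F' d t) (hd : d < 0) :
    ¬ IsLocalMin F t := by
  intro hmin
  have hder : deriv F =ᶠ[nhds t] F' := hF.mono fun s hs => hs.deriv
  have h2 : deriv (deriv F) t = d := by rw [hder.deriv_eq, hF'.deriv]
  have hmax : IsLocalMax F t :=
    isLocalMax_of_deriv_deriv_neg (by rw [h2]; exact hd) hmin.deriv_eq_zero
      hF.self_of_nhds.continuousAt
  have hconst : F =ᶠ[nhds t] fun _ => F t := by
    filter_upwards [hmin, hmax] with s h1 h2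
    exact le_antisymm h2 h1
  have h3 : deriv F =ᶠ[nhds t] fun _ => 0 := by
    have := hconst.deriv
    simpa using this
  have h4 := h3.deriv_eq
  rw [h2] at h4
  simp at h4
  linarith

/-- The superlevel condition in the coordinates `a = x - y`, `b = x + y`. -/
def Super (c a b : ℝ) : Prop :=
  c ^ 2 * (c ^ 2 + ((b ^ 2 - a ^ 2) / 2) ^ 2 + 1) <
    (a * b) ^ 2 * (c ^ 2 + ((b ^ 2 - a ^ 2) / 2) ^ 2)

lemma super_iff_log {c a b : ℝ} (hc : 0 < c) (ha : 0 < a) (hb : 0 < b) :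
    Super c a b ↔ 0 < Real.log a + Real.log b
      + Real.log (c ^ 2 + ((b ^ 2 - a ^ 2) / 2) ^ 2) / 2
      - Real.log (c ^ 2 + ((b ^ 2 - a ^ 2) / 2) ^ 2 + 1) / 2 - Real.log c := by
  unfold Super
  set T := c ^ 2 + ((b ^ 2 - a ^ 2) / 2) ^ 2
  have hT : 0 < T := by positivity
  rw [← Real.log_lt_log_iff (by positivity) (by positivity), Real.log_mul (by positivity)
    (by positivity), Real.log_mul (by positivity) (by positivity), Real.log_pow, Real.log_pow,
    Real.log_mul ha.ne' hb.ne']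
  push_cast
  constructor <;> intro h <;> linarith

set_option maxHeartbeats 1000000 in
/-- The superlevel condition passes from the endpoints of a segment in the quadrant `a, b > 0` to
the whole segment: at a nonpositive minimum of `F`, necessarily interior, `hess_neg` contradicts
the second derivative test. -/
lemma segment_super {c a₁ b₁ a₂ b₂ : ℝ} (hc : 5 < c) (ha₁ : 0 < a₁) (hb₁ : 0 < b₁)
    (ha₂ : 0 < a₂) (hb₂ : 0 < b₂) (h₁ : Super c a₁ b₁) (h₂ : Super c a₂ b₂)
    {t : ℝ} (ht : t ∈ Set.Icc (0 : ℝ) 1) :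
    Super c (a₁ + t * (a₂ - a₁)) (b₁ + t * (b₂ - b₁)) := by
  obtain ⟨α, hα⟩ : ∃ α, α = a₂ - a₁ := ⟨_, rfl⟩
  obtain ⟨β, hβ⟩ : ∃ β, β = b₂ - b₁ := ⟨_, rfl⟩
  rw [← hα, ← hβ]
  have hc0 : 0 < c := by linarith
  by_cases hne : α ≠ 0 ∨ β ≠ 0
  swap
  · push Not at hne
    simpa [hne.1, hne.2] using h₁
  let a : ℝ → ℝ := fun s => a₁ + s * α
  let b : ℝ → ℝ := fun s => b₁ + s * β
  let q : ℝ → ℝ := fun s => (b s ^ 2 - a s ^ 2) / 2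
  let T : ℝ → ℝ := fun s => c ^ 2 + q s ^ 2
  let r : ℝ → ℝ := fun s => b s * β - a s * α
  let F : ℝ → ℝ := fun s => Real.log (a s) + Real.log (b s) + Real.log (T s) / 2
    - Real.log (T s + 1) / 2 - Real.log c
  let F' : ℝ → ℝ := fun s => α / a s + β / b s + q s * r s / (T s * (T s + 1))
  have hda : ∀ s, HasDerivAt a α s := fun s =>
    (((hasDerivAt_id s).mul_const α).const_add a₁).congr_deriv (one_mul α)
  have hdb : ∀ s, HasDerivAt b β s := fun s =>
    (((hasDerivAt_id s).mul_const β).const_add b₁).congr_deriv (one_mul β)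
  have hdq : ∀ s, HasDerivAt q (r s) s := fun s => by
    refine ((((hdb s).fun_pow 2).sub ((hda s).fun_pow 2)).div_const 2).congr_deriv ?_
    simp only [r]; ring
  have hdr : ∀ s, HasDerivAt r (β ^ 2 - α ^ 2) s := fun s => by
    refine (((hdb s).mul_const β).sub ((hda s).mul_const α)).congr_deriv ?_
    ring
  have hdT : ∀ s, HasDerivAt T (2 * q s * r s) s := fun s => by
    refine (((hdq s).fun_pow 2).const_add (c ^ 2)).congr_deriv ?_
    ring
  have hT0 : ∀ s, 0 < T s := fun s => by positivity
  have hapos : ∀ s ∈ Set.Icc (0 : ℝ) 1, 0 < a s := fun s hs => by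
    have : a s = (1 - s) * a₁ + s * a₂ := by simp only [a, hα]; ring
    rw [this]
    rcases hs.1.eq_or_lt with h | h
    · rw [← h]; simpa using ha₁
    · have := mul_pos h ha₂
      have := mul_nonneg (sub_nonneg.2 hs.2) ha₁.le
      linarith
  have hbpos : ∀ s ∈ Set.Icc (0 : ℝ) 1, 0 < b s := fun s hs => by
    have : b s = (1 - s) * b₁ + s * b₂ := by simp only [b, hβ]; ring
    rw [this]
    rcases hs.1.eq_or_lt with h | h
    · rw [← h]; simpa using hb₁
    · have := mul_pos h hb₂
      have := mul_nonneg (sub_nonneg.2 hs.2) hb₁.le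
      linarith
  have hdF : ∀ s ∈ Set.Icc (0 : ℝ) 1, HasDerivAt F (F' s) s := fun s hs => by
    have hA := hapos s hs
    have hB := hbpos s hs
    have hT := hT0 s
    refine ((((((hda s).log hA.ne').add ((hdb s).log hB.ne')).add
      (((hdT s).log hT.ne').div_const 2)).sub
      ((((hdT s).add_const 1).log (by positivity)).div_const 2)).sub_const
      (Real.log c)).congr_deriv ?_
    simp only [F']
    generalize a s = A at *
    generalize b s = B at *
    generalize T s = V at *
    generalize q s = Q at *
    generalize r s = R at *
    field_simp
    ring
  have hsup : ∀ s ∈ Set.Icc (0 : ℝ) 1, (Super c (a s) (b s) ↔ 0 < F s) := fun s hs =>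
    super_iff_log hc0 (hapos s hs) (hbpos s hs)
  obtain ⟨m, hm, hmin⟩ := isCompact_Icc.exists_isMinOn (Set.nonempty_Icc.2 zero_le_one)
    (fun s hs => (hdF s hs).continuousAt.continuousWithinAt : ContinuousOn F (Set.Icc 0 1))
  change Super c (a t) (b t)
  rw [hsup t ht]
  refine lt_of_lt_of_le ?_ (hmin ht)
  by_contra hneg
  have hm0 : m ≠ 0 := by
    rintro rfl
    exact hneg ((hsup 0 hm).1 (by simpa [a, b] using h₁))
  have hm1 : m ≠ 1 := by
    rintro rfl
    exact hneg ((hsup 1 hm).1 (by simpa [a, b, hα, hβ] using h₂))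
  have hnhds : Set.Icc (0 : ℝ) 1 ∈ nhds m :=
    Icc_mem_nhds (lt_of_le_of_ne hm.1 hm0.symm) (lt_of_le_of_ne hm.2 hm1)
  have hA := hapos m hm
  have hB := hbpos m hm
  have hT := hT0 m
  have hp : a m * b m ≤ 2 * c := by
    rw [← hsup m hm] at hneg
    have h : (a m * b m) ^ 2 * T m ≤ c ^ 2 * (T m + 1) := not_lt.1 hneg
    have hT1 : 1 ≤ T m := by
      have : 0 ≤ q m ^ 2 := sq_nonneg _
      simp only [T]; nlinarith
    by_contra hcon
    have : (2 * c) ^ 2 < (a m * b m) ^ 2 := by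
      have := not_le.1 hcon
      gcongr
    nlinarith [mul_lt_mul_of_pos_right this hT, sq_pos_of_pos hc0]
  have hdF' := ((((hda m).fun_inv hA.ne').const_mul α).add
    (((hdb m).fun_inv hB.ne').const_mul β)).add
    (((hdq m).fun_mul (hdr m)).fun_div ((hdT m).fun_mul ((hdT m).add_const 1))
      (by positivity))
  refine not_localMin_of_second_deriv_neg (F := F) (F' := F')
    (Filter.mem_of_superset hnhds hdF) hdF' ?_ (hmin.isLocalMin hnhds)
  have key := hess_neg hc hA hB hp hne
  -- The remaining term of the second derivative, from differentiating `1 / (T (T + 1))`,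
  -- has a favourable sign.
  have hrest : 0 ≤ 2 * (q m * r m) ^ 2 * (2 * T m + 1) / (T m * (T m + 1)) ^ 2 := by positivity
  have hkey : -(α ^ 2 / a m ^ 2) - β ^ 2 / b m ^ 2 +
      (r m ^ 2 + q m * (β ^ 2 - α ^ 2)) / (T m * (T m + 1)) < 0 := key
  refine lt_of_le_of_lt (le_of_eq ?_) (sub_neg_of_lt (lt_of_lt_of_le hkey hrest))
  clear hkey hrest key
  generalize a m = A at *
  generalize b m = B at *
  generalize T m = V at *
  generalize q m = Q at *
  generalize r m = R at *
  field_simp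
  ring

/-- The superlevel condition `c < u` in terms of `p = Re z²` and `q = Im z²`, with `w = Im g`.
The right-hand inequality becomes an equality at `c = u`, and
`C (C + q² + 1) / (C + q²)` is increasing in `C = c²`. -/
lemma lt_iff_super {c u w p q : ℝ} (hc : 0 < c) (hu : 0 < u)
    (h1 : u ^ 2 - w ^ 2 = p ^ 2 - q ^ 2 - 1) (h2 : u * w = p * q) :
    c < u ↔ c ^ 2 * (c ^ 2 + q ^ 2 + 1) < p ^ 2 * (c ^ 2 + q ^ 2) := by
  have hid : p ^ 2 * (u ^ 2 + q ^ 2) = u ^ 2 * (u ^ 2 + q ^ 2 + 1) := by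
    linear_combination (-u ^ 2) * h1 - (u * w + p * q) * h2
  have hD : (p ^ 2 * (c ^ 2 + q ^ 2) - c ^ 2 * (c ^ 2 + q ^ 2 + 1)) * (u ^ 2 + q ^ 2) =
      (u ^ 2 - c ^ 2) * ((u ^ 2 + q ^ 2) * (c ^ 2 + q ^ 2) + q ^ 2) := by
    linear_combination (c ^ 2 + q ^ 2) * hid
  have hA : 0 < u ^ 2 + q ^ 2 := by positivity
  have hB : 0 < (u ^ 2 + q ^ 2) * (c ^ 2 + q ^ 2) + q ^ 2 := by positivity
  rw [← sub_pos (b := c ^ 2 * _), ← mul_pos_iff_of_pos_right hA, hD,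
    mul_pos_iff_of_pos_right hB, sub_pos, pow_lt_pow_iff_left₀ hc.le hu.le two_ne_zero]

/-- For the Martin function `u = Re √(z⁴ - 1)` on the sector
`S = {Re z > 0, |Im z| < Re z}` with the segment `[0,1]` removed, the
superlevel sets `Γ_c` are convex for all sufficiently large `c`. -/
theorem stmt_15 (S Ω : Set ℂ)
    (hS : S = {z : ℂ | 0 < z.re ∧ |z.im| < z.re})
    (hΩ : Ω = S \ {z : ℂ | z.im = 0 ∧ 0 ≤ z.re ∧ z.re ≤ 1})
    (g : ℂ → ℂ) (hg : DifferentiableOn ℂ g Ω)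
    (hsq : ∀ z ∈ Ω, g z ^ 2 = z ^ 4 - 1)
    (hre : ∀ z ∈ Ω, 0 < (g z).re)
    (u : ℂ → ℝ) (hu : ∀ z : ℂ, u z = (g z).re) :
    ∃ c₀ : ℝ, 0 < c₀ ∧ ∀ c : ℝ, c₀ < c → Convex ℝ {z ∈ Ω | c < u z} := by
  refine ⟨5, by norm_num, fun c hc => ?_⟩
  have hc0 : 0 < c := by linarith
  have hlevel : ∀ z ∈ Ω, (c < u z ↔ Super c (z.re - z.im) (z.re + z.im)) := fun z hz => by
    have h := hsq z hz
    have hr := congrArg Complex.re h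
    have hi := congrArg Complex.im h
    simp only [pow_succ, pow_zero, one_mul, Complex.mul_re, Complex.mul_im, Complex.sub_re,
      Complex.sub_im, Complex.one_re, Complex.one_im] at hr hi
    rw [hu, lt_iff_super (w := (g z).im) (p := z.re ^ 2 - z.im ^ 2) (q := 2 * z.re * z.im) hc0
      (hre z hz) (by linear_combination hr) (by linear_combination hi / 2), Super]
    ring_nf
  have hmem : {z ∈ Ω | c < u z} = {z : ℂ | 0 < z.re - z.im ∧ 0 < z.re + z.im ∧
      Super c (z.re - z.im) (z.re + z.im)} := by
    ext z
    constructor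
    · rintro ⟨hz, hcz⟩
      have hzS : z ∈ S := by rw [hΩ] at hz; exact hz.1
      rw [hS] at hzS
      have := abs_lt.1 hzS.2
      exact ⟨by linarith, by linarith [this.1], (hlevel z hz).1 hcz⟩
    · rintro ⟨ha, hb, hs⟩
      have hz : z ∈ Ω := by
        rw [hΩ, hS]
        refine ⟨⟨by linarith, abs_lt.2 ⟨by linarith, by linarith⟩⟩, ?_⟩
        -- On the removed segment `p ≤ 1` and `q = 0`, contradicting `p² > c² + 1`.
        rintro ⟨h0, h1, h2⟩
        simp only [Super, h0, sub_zero, add_zero, sub_self, zero_div] at hs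
        have h4 : (z.re * z.re) ^ 2 ≤ 1 := pow_le_one₀ (by positivity) (by nlinarith)
        nlinarith [sq_pos_of_pos hc0]
      exact ⟨hz, (hlevel z hz).2 hs⟩
  rw [hmem]
  rintro z ⟨hz1, hz2, hz3⟩ w ⟨hw1, hw2, hw3⟩ s t hs ht hst
  have hs' : s = 1 - t := by linarith
  have hea : (s • z + t • w).re - (s • z + t • w).im =
      (z.re - z.im) + t * ((w.re - w.im) - (z.re - z.im)) := by
    simp [hs']; ring
  have heb : (s • z + t • w).re + (s • z + t • w).im =
      (z.re + z.im) + t * ((w.re + w.im) - (z.re + z.im)) := by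
    simp [hs']; ring
  have hcomb : ∀ x y : ℝ, 0 < x → 0 < y → 0 < x + t * (y - x) := fun x y hx hy => by
    have : x + t * (y - x) = s • x + t • y := by simp [hs']; ring
    rw [this]
    exact (convex_Ioi (0 : ℝ)) hx hy hs ht hst
  refine ⟨?_, ?_, ?_⟩
  · rw [hea]; exact hcomb _ _ hz1 hw1
  · rw [heb]; exact hcomb _ _ hz2 hw2
  · rw [hea, heb]
    exact segment_super hc hz1 hz2 hw1 hw2 hz3 hw3 ⟨ht, by linarith⟩
end
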